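/- Assume that v_1,…,v_m are all invertible in k. Then H_n(v_1,…,v_m;q) is a symmetric k-algebra: there exists a k-linear map tr : H_n → k such that tr(xy) = tr(yx) for all x, y ∈ H_n and such that the bilinear form (x,y) ↦ tr(xy) on H_n is nondegenerate. -/

import Mathlib

noncomputable section
open scoped Classical
open scoped Fin.NatCast

namespace Cyclo

/-- The defining relations of the cyclotomic Hecke algebra of type `G(m,1,n)`.
Generator `i : Fin n` corresponds to `a_{i+1}` of the paper. -/
inductive Rel (k : Type) [Field k] (m n : ℕ) (v : Fin m → k) (q : k) :
    FreeAlgebra k (Fin n) → FreeAlgebra k (Fin n) → Prop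
  | cyclo (i : Fin n) (hi : i.1 = 0) :
      Rel k m n v q
        ((List.ofFn fun j : Fin m =>
          (FreeAlgebra.ι k i - algebraMap k (FreeAlgebra k (Fin n)) (v j))).prod) 0
  | quad (i : Fin n) (hi : 1 ≤ i.1) :
      Rel k m n v q
        ((FreeAlgebra.ι k i - algebraMap k (FreeAlgebra k (Fin n)) q) * (FreeAlgebra.ι k i + 1)) 0
  | braid0 (i j : Fin n) (hi : i.1 = 0) (hj : j.1 = 1) :
      Rel k m n v q
        (FreeAlgebra.ι k i * FreeAlgebra.ι k j * FreeAlgebra.ι k i * FreeAlgebra.ι k j)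
        (FreeAlgebra.ι k j * FreeAlgebra.ι k i * FreeAlgebra.ι k j * FreeAlgebra.ι k i)
  | comm (i j : Fin n) (h : i.1 + 2 ≤ j.1) :
      Rel k m n v q (FreeAlgebra.ι k i * FreeAlgebra.ι k j)
        (FreeAlgebra.ι k j * FreeAlgebra.ι k i)
  | braid (i j : Fin n) (hi : 1 ≤ i.1) (hj : j.1 = i.1 + 1) :
      Rel k m n v q
        (FreeAlgebra.ι k j * FreeAlgebra.ι k i * FreeAlgebra.ι k j)
        (FreeAlgebra.ι k i * FreeAlgebra.ι k j * FreeAlgebra.ι k i)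

/-- The cyclotomic Hecke algebra `H_n(v_1,…,v_m;q)` of type `G(m,1,n)`. -/
def CH (k : Type) [Field k] (m n : ℕ) (v : Fin m → k) (q : k) : Type :=
  RingQuot (Rel k m n v q)

instance (k : Type) [Field k] (m n : ℕ) (v : Fin m → k) (q : k) : Ring (CH k m n v q) :=
  inferInstanceAs (Ring (RingQuot (Rel k m n v q)))

instance (k : Type) [Field k] (m n : ℕ) (v : Fin m → k) (q : k) : Algebra k (CH k m n v q) :=
  inferInstanceAs (Algebra k (RingQuot (Rel k m n v q)))

variable (k : Type) [Field k] (m n : ℕ) (v : Fin m → k) (q : k)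

/-- `gen k m n v q t` is the generator `a_{t+1}` (so `gen 0 = a_1`, …, `gen (n-1) = a_n`). -/
def gen [NeZero n] (t : ℕ) : CH k m n v q :=
  RingQuot.mkAlgHom k (Rel k m n v q) (FreeAlgebra.ι k ((t : Fin n)))

/-- `murphyAux k m n v q t` is the Murphy element `L_{t+1}`. -/
def murphyAux [NeZero n] : ℕ → CH k m n v q
  | 0 => gen k m n v q 0
  | t + 1 => q⁻¹ • (gen k m n v q (t + 1) * murphyAux t * gen k m n v q (t + 1))

/-- The Murphy element `L_{i+1}`, for `i : Fin n`. -/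
def murphy [NeZero n] (i : Fin n) : CH k m n v q := murphyAux k m n v q i.1

/-- The product of adjacent transpositions encoded by a list of `0`-based indices:
`t` encodes the transposition `(t, t+1)` (in `0`-based labels), i.e. `s_{t+1}` of the paper. -/
def swapProd [NeZero n] (l : List ℕ) : Equiv.Perm (Fin n) :=
  (l.map fun t => Equiv.swap ((t : Fin n)) (((t + 1 : ℕ) : Fin n))).prod

/-- The corresponding product of generators of the Hecke algebra: the index `t`
(encoding `s_{t+1}`) contributes the generator `a_{t+2} = gen (t+1)`. -/
def genProd [NeZero n] (l : List ℕ) : CH k m n v q :=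
  (l.map fun t => gen k m n v q (t + 1)).prod

/-- `l` is a reduced word for the permutation `w`. -/
def IsReducedWord [NeZero n] (l : List ℕ) (w : Equiv.Perm (Fin n)) : Prop :=
  (∀ t ∈ l, t + 1 < n) ∧ swapProd n l = w ∧
    ∀ l' : List ℕ, (∀ t ∈ l', t + 1 < n) → swapProd n l' = w → l.length ≤ l'.length

/-- `aw` assigns to each permutation `w` the element `a_w` computed from a(ny) reduced word. -/
def IsAW [NeZero n] (aw : Equiv.Perm (Fin n) → CH k m n v q) : Prop :=
  ∀ (w : Equiv.Perm (Fin n)) (l : List ℕ), IsReducedWord n l w → aw w = genProd k m n v q l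



/-- An `m`-multipartition of `n`:  `part c` is the partition `λ^{(c+1)}`
(so `c = m-1` corresponds to the component `λ^{(m)}` of the paper), given by its
(weakly decreasing) list of row lengths `part c 0, part c 1, …`. -/
structure Multipartition (m n : ℕ) where
  part : Fin m → ℕ → ℕ
  mono : ∀ c i, part c (i + 1) ≤ part c i
  bound : ∀ c i, n ≤ i → part c i = 0
  total : (∑ c : Fin m, ∑ i ∈ Finset.range n, part c i) = n

namespace Multipartition

variable {m n : ℕ}

/-- The size `|λ^{(c+1)}|` of a component. -/
def compSize (Λ : Multipartition m n) (c : Fin m) : ℕ :=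
  ∑ i ∈ Finset.range n, Λ.part c i

/-- `|λ^{(1)}| + ⋯ + |λ^{(kk)}|`. -/
def compSizeUpto (Λ : Multipartition m n) (kk : ℕ) : ℕ :=
  ∑ c ∈ Finset.range kk, (if h : c < m then Λ.compSize ⟨c, h⟩ else 0)

/-- The statistic `Σ_{j>k}|λ^{(j)}| + Σ_{j=1}^{l} λ^{(k)}_j` of the dominance order,
where the component `k` (`1`-based) is `c.1 + 1`. -/
def domStat (Λ : Multipartition m n) (c : Fin m) (l : ℕ) : ℕ :=
  (∑ c' ∈ Finset.univ.filter (fun c' : Fin m => c.1 < c'.1), Λ.compSize c') +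
    ∑ j ∈ Finset.range l, Λ.part c j

/-- The dominance order `Λ ⊵ M`. -/
def Dominates (Λ M : Multipartition m n) : Prop :=
  ∀ (c : Fin m) (l : ℕ), M.domStat c l ≤ Λ.domStat c l

/-- Strict dominance `Λ ▷ M`. -/
def StrictDom (Λ M : Multipartition m n) : Prop :=
  Λ.Dominates M ∧ Λ ≠ M

/-- The (0-based) entry of the canonical tableau `t^Λ` in the box in row `i`, column `j`
of component `c`: the boxes are filled row by row, starting with the rows of `λ^{(m)}`,
then those of `λ^{(m-1)}`, and so on. -/
def canonEntry (Λ : Multipartition m n) (c : Fin m) (i j : ℕ) : ℕ :=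
  (∑ c' ∈ Finset.univ.filter (fun c' : Fin m => c.1 < c'.1), Λ.compSize c') +
    (∑ i' ∈ Finset.range i, Λ.part c i') + j

end Multipartition

/-- A standard tableau of shape `Λ`, with (0-based) entries `0, …, n-1`:
`entry c i j` is the entry in the box in row `i`, column `j` of component `c`
(and is normalised to `0` outside the boxes of `Λ`). -/
structure StdTableau {m n : ℕ} (Λ : Multipartition m n) where
  entry : Fin m → ℕ → ℕ → ℕ
  lt_n : ∀ c i j, j < Λ.part c i → entry c i j < n
  inj : ∀ c i j c' i' j', j < Λ.part c i → j' < Λ.part c' i' →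
    entry c i j = entry c' i' j' → (c, i, j) = (c', i', j')
  surj : ∀ x, x < n → ∃ c i j, j < Λ.part c i ∧ entry c i j = x
  row : ∀ c i j, j + 1 < Λ.part c i → entry c i j < entry c i (j + 1)
  col : ∀ c i j, j < Λ.part c (i + 1) → entry c i j < entry c (i + 1) j
  outside : ∀ c i j, ¬ j < Λ.part c i → entry c i j = 0

variable (k : Type) [Field k] (m n : ℕ)

/-- `d` assigns to each standard tableau `T` of each shape `Λ` the permutation `d(T)`
sending, box by box, the entry of the canonical tableau `t^Λ` to the entry of `T`. -/
def IsD [NeZero n] (d : ∀ Λ : Multipartition m n, StdTableau Λ → Equiv.Perm (Fin n)) : Prop :=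
  ∀ (Λ : Multipartition m n) (T : StdTableau Λ) (c : Fin m) (i j : ℕ), j < Λ.part c i →
    d Λ T ((Λ.canonEntry c i j : ℕ) : Fin n) = ((T.entry c i j : ℕ) : Fin n)

/-- Membership in the row stabiliser `S_Λ` of the canonical tableau `t^Λ`. -/
def InRowStab [NeZero n] (Λ : Multipartition m n) (w : Equiv.Perm (Fin n)) : Prop :=
  ∀ (c : Fin m) (i j : ℕ), j < Λ.part c i →
    ∃ j', j' < Λ.part c i ∧
      w ((Λ.canonEntry c i j : ℕ) : Fin n) = ((Λ.canonEntry c i j' : ℕ) : Fin n)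


variable (k : Type) [Field k] (m n : ℕ) (v : Fin m → k) (q : k)

open Multipartition

/-- The element `x_Λ = Σ_{w ∈ S_Λ} a_w`, where `aw` computes the elements `a_w`. -/
def xlam [NeZero n] (aw : Equiv.Perm (Fin n) → CH k m n v q) (Λ : Multipartition m n) :
    CH k m n v q :=
  ∑ w : Equiv.Perm (Fin n), if InRowStab m n Λ w then aw w else 0

/-- `a_kk = n − |λ^{(1)}| − ⋯ − |λ^{(kk)}|`. -/
def aVal (Λ : Multipartition m n) (kk : ℕ) : ℕ := n - Λ.compSizeUpto kk

/-- The element `u_a = ∏_{kk} (L_1 − v_kk)(L_2 − v_kk)⋯(L_{a_kk} − v_kk)`. -/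
def ua [NeZero n] (Λ : Multipartition m n) : CH k m n v q :=
  (List.ofFn fun kk : Fin m =>
    (List.ofFn fun ii : Fin n =>
      if ii.1 < aVal m n Λ (kk.1 + 1) then
        murphy k m n v q ii - algebraMap k (CH k m n v q) (v kk)
      else 1).prod).prod

/-- The element `m_Λ = x_Λ u_a`. -/
def mlam [NeZero n] (aw : Equiv.Perm (Fin n) → CH k m n v q) (Λ : Multipartition m n) :
    CH k m n v q :=
  xlam k m n v q aw Λ * ua k m n v q Λ

/-- The element `m_{st} = a_{d(s)}^* ⬝ m_Λ ⬝ a_{d(t)}`;  here `aw` computes the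
elements `a_w`, `σ` is the `*` anti-involution and `d` computes the permutations `d(t)`. -/
def mst [NeZero n] (aw : Equiv.Perm (Fin n) → CH k m n v q) (σ : CH k m n v q →ₗ[k] CH k m n v q)
    (d : ∀ Λ : Multipartition m n, StdTableau Λ → Equiv.Perm (Fin n))
    {Λ : Multipartition m n} (s t : StdTableau Λ) : CH k m n v q :=
  σ (aw (d Λ s)) * mlam k m n v q aw Λ * aw (d Λ t)

/-- `σ` is the `*` anti-involution: the `k`-linear anti-automorphism fixing the generators. -/
def IsStar [NeZero n] (σ : CH k m n v q →ₗ[k] CH k m n v q) : Prop :=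
  σ 1 = 1 ∧ (∀ x y, σ (x * y) = σ y * σ x) ∧ ∀ t, t < n → σ (gen k m n v q t) = gen k m n v q t

/-- The set of elements `m_{uv}`, for `u, v` standard tableaux of a common shape `M ▷ Λ`. -/
def IsetSet [NeZero n] (aw : Equiv.Perm (Fin n) → CH k m n v q)
    (σ : CH k m n v q →ₗ[k] CH k m n v q)
    (d : ∀ Λ : Multipartition m n, StdTableau Λ → Equiv.Perm (Fin n))
    (Λ : Multipartition m n) : Set (CH k m n v q) :=
  {x | ∃ (M : Multipartition m n) (_ : M.StrictDom Λ) (u v' : StdTableau M),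
    x = mst k m n v q aw σ d u v'}

/-- `I_Λ`, the `k`-span of the `m_{uv}` with shape strictly dominating `Λ`. -/
def Ilam [NeZero n] (aw : Equiv.Perm (Fin n) → CH k m n v q)
    (σ : CH k m n v q →ₗ[k] CH k m n v q)
    (d : ∀ Λ : Multipartition m n, StdTableau Λ → Equiv.Perm (Fin n))
    (Λ : Multipartition m n) : Submodule k (CH k m n v q) :=
  Submodule.span k (IsetSet k m n v q aw σ d Λ)

/-- The image `z_Λ h` of `m_Λ h` in the quotient `H_n / I_Λ`. -/
def zh [NeZero n] (aw : Equiv.Perm (Fin n) → CH k m n v q)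
    (σ : CH k m n v q →ₗ[k] CH k m n v q)
    (d : ∀ Λ : Multipartition m n, StdTableau Λ → Equiv.Perm (Fin n))
    (Λ : Multipartition m n) (h : CH k m n v q) :
    CH k m n v q ⧸ Ilam k m n v q aw σ d Λ :=
  Submodule.Quotient.mk (mlam k m n v q aw Λ * h)

/-- The Specht module `S^Λ = z_Λ ⬝ (H_n/I_Λ)`, as a `k`-submodule of `H_n / I_Λ`. -/
def Specht [NeZero n] (aw : Equiv.Perm (Fin n) → CH k m n v q)
    (σ : CH k m n v q →ₗ[k] CH k m n v q)
    (d : ∀ Λ : Multipartition m n, StdTableau Λ → Equiv.Perm (Fin n))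
    (Λ : Multipartition m n) :
    Submodule k (CH k m n v q ⧸ Ilam k m n v q aw σ d Λ) :=
  Submodule.span k (Set.range (zh k m n v q aw σ d Λ))

/-- The generator `z_Λ h` as an element of the Specht module. -/
def zhS [NeZero n] (aw : Equiv.Perm (Fin n) → CH k m n v q)
    (σ : CH k m n v q →ₗ[k] CH k m n v q)
    (d : ∀ Λ : Multipartition m n, StdTableau Λ → Equiv.Perm (Fin n))
    (Λ : Multipartition m n) (h : CH k m n v q) :
    Specht k m n v q aw σ d Λ :=
  ⟨zh k m n v q aw σ d Λ h, Submodule.subset_span ⟨h, rfl⟩⟩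

section Presentation

variable {k : Type} [Field k] {m : ℕ}

/-- The relations of the cyclotomic Hecke algebra, for a sequence of elements of an algebra. -/
structure Sat {A : Type} [Ring A] [Algebra k A] (v : Fin m → k) (q : k) (N : ℕ) (g : ℕ → A) :
    Prop where
  cyclo : 0 < N → ((List.ofFn v).map fun a => g 0 - algebraMap k A a).prod = 0
  quad : ∀ l, 1 ≤ l → l < N → g l * g l = (q - 1) • g l + q • (1 : A)
  braid0 : 1 < N → g 0 * g 1 * g 0 * g 1 = g 1 * g 0 * g 1 * g 0
  comm : ∀ i j, i + 2 ≤ j → j < N → g i * g j = g j * g i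
  braid : ∀ i, 1 ≤ i → i + 1 < N → g (i + 1) * g i * g (i + 1) = g i * g (i + 1) * g i

/-- The quotient map from the free algebra. -/
def mkH (v : Fin m → k) (q : k) (N : ℕ) : FreeAlgebra k (Fin N) →ₐ[k] CH k m N v q :=
  RingQuot.mkAlgHom k (Rel k m N v q)

/-- The generators of the cyclotomic Hecke algebra, indexed by natural numbers. -/
def gg (v : Fin m → k) (q : k) (N l : ℕ) : CH k m N v q :=
  if h : l < N then mkH v q N (FreeAlgebra.ι k ⟨l, h⟩) else 0

theorem mkH_surjective (v : Fin m → k) (q : k) (N : ℕ) : Function.Surjective (mkH v q N) :=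
  RingQuot.mkAlgHom_surjective k _

theorem gg_of_lt (v : Fin m → k) (q : k) {N l : ℕ} (h : l < N) :
    gg v q N l = mkH v q N (FreeAlgebra.ι k ⟨l, h⟩) := by
  rw [gg, dif_pos h]

theorem mkH_rel (v : Fin m → k) (q : k) (N : ℕ) {x y : FreeAlgebra k (Fin N)}
    (h : Rel k m N v q x y) : mkH v q N x = mkH v q N y :=
  RingQuot.mkAlgHom_rel k h

theorem sat_gg (v : Fin m → k) (q : k) (N : ℕ) : Sat v q N (gg v q N) where
  cyclo h := by
    have := mkH_rel v q N (Rel.cyclo ⟨0, h⟩ rfl)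
    rw [map_list_prod, map_zero] at this
    rw [← this, gg_of_lt v q h]
    congr 1
    simp [List.map_ofFn, Function.comp_def]
  quad l h1 h := by
    have := mkH_rel v q N (Rel.quad ⟨l, h⟩ h1)
    rw [gg_of_lt v q h]
    simp only [map_mul, map_sub, map_add, map_one, map_zero, AlgHom.commutes] at this
    rw [sub_mul, mul_add, mul_add, mul_one, mul_one, ← Algebra.smul_def,
      Algebra.algebraMap_eq_smul_one] at this
    rw [← sub_eq_zero, ← this]
    module
  braid0 h := by
    have := mkH_rel v q N (Rel.braid0 ⟨0, by omega⟩ ⟨1, h⟩ rfl rfl)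
    simpa only [map_mul, ← gg_of_lt] using this
  comm i j hij hj := by
    have := mkH_rel v q N (Rel.comm ⟨i, by omega⟩ ⟨j, hj⟩ hij)
    simpa only [map_mul, ← gg_of_lt] using this
  braid i h1 h := by
    have := mkH_rel v q N (Rel.braid ⟨i, by omega⟩ ⟨i + 1, h⟩ h1 rfl)
    simpa only [map_mul, ← gg_of_lt] using this

/-- The universal property of the cyclotomic Hecke algebra. -/
def liftH {A : Type} [Ring A] [Algebra k A] {v : Fin m → k} {q : k} {N : ℕ} {g : ℕ → A}
    (hg : Sat v q N g) : CH k m N v q →ₐ[k] A :=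
  RingQuot.liftAlgHom k ⟨FreeAlgebra.lift k fun i : Fin N => g i.1, by
    intro x y h
    induction h with
    | cyclo i hi =>
      rw [map_list_prod, map_zero, ← hg.cyclo (by have := i.2; omega)]
      congr 1
      simp [List.map_ofFn, Function.comp_def, hi]
    | quad i hi =>
      simp only [map_mul, map_sub, map_add, map_one, map_zero, AlgHom.commutes,
        FreeAlgebra.lift_ι_apply]
      rw [sub_mul, mul_add, mul_add, mul_one, mul_one, ← Algebra.smul_def,
        Algebra.algebraMap_eq_smul_one, hg.quad _ hi i.2]
      module
    | braid0 i j hi hj =>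
      simp only [map_mul, FreeAlgebra.lift_ι_apply, hi, hj]
      exact hg.braid0 (by have := j.2; omega)
    | comm i j h =>
      simp only [map_mul, FreeAlgebra.lift_ι_apply]
      exact hg.comm _ _ h j.2
    | braid i j hi hj =>
      simp only [map_mul, FreeAlgebra.lift_ι_apply, hj]
      exact hg.braid _ hi (by have := j.2; omega)⟩

theorem liftH_gg {A : Type} [Ring A] [Algebra k A] {v : Fin m → k} {q : k} {N : ℕ} {g : ℕ → A}
    (hg : Sat v q N g) {l : ℕ} (hl : l < N) : liftH hg (gg v q N l) = g l := by
  rw [gg_of_lt v q hl]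
  unfold liftH mkH
  erw [RingQuot.liftAlgHom_mkAlgHom_apply]
  simp

theorem ind_gg {v : Fin m → k} {q : k} {N : ℕ} {P : CH k m N v q → Prop}
    (halg : ∀ c : k, P (algebraMap k _ c)) (hgen : ∀ l, l < N → P (gg v q N l))
    (hmul : ∀ x y, P x → P y → P (x * y)) (hadd : ∀ x y, P x → P y → P (x + y)) (x) : P x := by
  obtain ⟨y, rfl⟩ := mkH_surjective v q N x
  induction y using FreeAlgebra.induction with
  | grade0 c => rw [AlgHom.commutes]; exact halg c
  | grade1 i => rw [← gg_of_lt v q i.2]; exact hgen _ i.2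
  | mul a b ha hb => rw [map_mul]; exact hmul _ _ ha hb
  | add a b ha hb => rw [map_add]; exact hadd _ _ ha hb

theorem ind_left {v : Fin m → k} {q : k} {N : ℕ} (D : Submodule k (CH k m N v q))
    (h1 : 1 ∈ D) (hg : ∀ l, l < N → ∀ x ∈ D, gg v q N l * x ∈ D) (x) : x ∈ D := by
  have key : ∀ x : CH k m N v q, ∀ y ∈ D, x * y ∈ D := by
    intro x
    induction x using ind_gg with
    | halg c => intro y hy; rw [← Algebra.smul_def]; exact D.smul_mem _ hy
    | hgen l hl => exact hg l hl
    | hmul a b ha hb => intro y hy; rw [mul_assoc]; exact ha _ (hb _ hy)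
    | hadd a b ha hb => intro y hy; rw [add_mul]; exact D.add_mem (ha _ hy) (hb _ hy)
  simpa using key x 1 h1

end Presentation

section OperatorsT

variable {k : Type} [Field k] {m : ℕ} {P : Type} [Ring P] [Algebra k P]

/-- The action of the generator `T_{l+1}` on the induced module. -/
def opT (q : k) (G : ℕ → P) (l : ℕ) : (ℕ → P) →ₗ[k] (ℕ → P) where
  toFun w i := if i < l then G l * w i else if i = l then w (l + 1) + (q - 1) • w l
    else if i = l + 1 then q • w l else G (l + 1) * w i
  map_add' x y := by
    funext i
    simp only [Pi.add_apply, mul_add, smul_add]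
    split_ifs <;> abel
  map_smul' c x := by
    funext i
    simp only [Pi.smul_apply, RingHom.id_apply, mul_smul_comm]
    split_ifs <;> simp only [smul_add, smul_smul, mul_comm]

variable {q : k} {G : ℕ → P}

theorem opT_lt {l i : ℕ} (w : ℕ → P) (h : i < l) : opT q G l w i = G l * w i := by
  simp [opT, h]

theorem opT_self {l : ℕ} (w : ℕ → P) : opT q G l w l = w (l + 1) + (q - 1) • w l := by
  simp [opT]

theorem opT_succ {l : ℕ} (w : ℕ → P) : opT q G l w (l + 1) = q • w l := by
  simp [opT]

theorem opT_gt {l i : ℕ} (w : ℕ → P) (h : l + 1 < i) : opT q G l w i = G (l + 1) * w i := by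
  have h1 : ¬ i < l := by omega
  have h2 : ¬ i = l := by omega
  have h3 : ¬ i = l + 1 := by omega
  simp [opT, h1, h2, h3]

theorem opT_quad {v : Fin m → k} {N : ℕ} (hG : Sat v q N G) {l i : ℕ} (hl : l + 1 ≤ N)
    (hi : i ≤ N) (w : ℕ → P) :
    opT q G l (opT q G l w) i = ((q - 1) • opT q G l w + q • w) i := by
  rw [Pi.add_apply, Pi.smul_apply, Pi.smul_apply]
  rcases lt_trichotomy i l with h | rfl | h
  · rw [opT_lt _ h, opT_lt _ h, ← mul_assoc, hG.quad l (by omega) (by omega), add_mul,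
      smul_mul_assoc, smul_mul_assoc, one_mul]
  · rw [opT_self, opT_succ, opT_self]; module
  · rcases Nat.lt_or_ge (l + 1) i with h' | h'
    · rw [opT_gt _ h', opT_gt _ h', ← mul_assoc, hG.quad _ (by omega) (by omega), add_mul,
        smul_mul_assoc, smul_mul_assoc, one_mul]
    · obtain rfl : i = l + 1 := by omega
      rw [opT_succ, opT_succ, opT_self]; module

theorem opT_comm {v : Fin m → k} {N : ℕ} (hG : Sat v q N G) {a b i : ℕ} (hab : a + 2 ≤ b)
    (hb : b + 1 ≤ N) (hi : i ≤ N) (w : ℕ → P) :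
    opT q G a (opT q G b w) i = opT q G b (opT q G a w) i := by
  rcases lt_trichotomy i a with h | rfl | h
  · rw [opT_lt _ h, opT_lt _ (by omega), opT_lt _ (by omega), opT_lt _ h, ← mul_assoc, ← mul_assoc,
      hG.comm a b hab (by omega)]
  · rw [opT_self, opT_lt _ (by omega), opT_lt _ (by omega), opT_lt _ (by omega), opT_self,
      mul_add, mul_smul_comm]
  rcases lt_trichotomy i (a + 1) with h | rfl | h
  · omega
  · rw [opT_succ, opT_lt _ (by omega), opT_lt _ (by omega), opT_succ, mul_smul_comm]
  rcases lt_trichotomy i b with h | rfl | h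
  · rw [opT_gt _ (by omega), opT_lt _ (by omega), opT_lt _ (by omega), opT_gt _ (by omega),
      ← mul_assoc, ← mul_assoc, hG.comm (a + 1) b (by omega) (by omega)]
  · rw [opT_gt _ (by omega), opT_self, opT_self, opT_gt _ (by omega), opT_gt _ (by omega),
      mul_add, mul_smul_comm]
  rcases lt_trichotomy i (b + 1) with h | rfl | h
  · omega
  · rw [opT_gt _ (by omega), opT_succ, opT_succ, opT_gt _ (by omega), mul_smul_comm]
  · rw [opT_gt _ (by omega), opT_gt _ (by omega), opT_gt _ (by omega), opT_gt _ (by omega),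
      ← mul_assoc, ← mul_assoc, hG.comm (a + 1) (b + 1) (by omega) (by omega)]

theorem opT_braid {v : Fin m → k} {N : ℕ} (hG : Sat v q N G) {a i : ℕ}
    (ha : a + 2 ≤ N) (hi : i ≤ N) (w : ℕ → P) :
    opT q G (a + 1) (opT q G a (opT q G (a + 1) w)) i =
      opT q G a (opT q G (a + 1) (opT q G a w)) i := by
  rcases lt_trichotomy i a with h | rfl | h
  · simp only [opT_lt _ h, opT_lt _ (show i < a + 1 by omega), ← mul_assoc]
    rw [hG.braid a (by omega) (by omega)]
  · simp only [opT_lt _ (show i < i + 1 by omega), opT_self, opT_succ,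
      opT_gt _ (show i + 1 < i + 2 by omega), mul_add, mul_smul_comm]
    rcases Nat.eq_zero_or_pos i with rfl | h0
    · have := hG.quad (0 + 1) (by omega) (by omega)
      rw [← mul_assoc (G (0 + 1)), this, add_mul, smul_mul_assoc, smul_mul_assoc, one_mul]
      module
    · have := hG.quad (i + 1) (by omega) (by omega)
      rw [← mul_assoc (G (i + 1)), this, add_mul, smul_mul_assoc, smul_mul_assoc, one_mul]
      module
  rcases lt_trichotomy i (a + 1) with h | rfl | h
  · omega
  · simp only [opT_lt _ (show a < a + 1 by omega), opT_self, opT_succ,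
      opT_gt _ (show a + 1 < a + 2 by omega), mul_add, mul_smul_comm, opT_lt _ (Nat.lt_succ_self a)]
    try module
  rcases lt_trichotomy i (a + 2) with h | rfl | h
  · omega
  · simp only [opT_lt _ (show a < a + 1 by omega), opT_self, opT_succ,
      opT_gt _ (show a + 1 < a + 1 + 1 by omega), mul_smul_comm]
  · simp only [opT_gt _ (show a + 1 < i by omega), opT_gt _ (show a + 1 + 1 < i by omega),
      ← mul_assoc]
    rw [hG.braid (a + 1) (by omega) (by omega)]

theorem opT_mul_right (l : ℕ) (w : ℕ → P) (b : P) (i : ℕ) :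
    opT q G l (fun j => w j * b) i = opT q G l w i * b := by
  simp only [opT, LinearMap.coe_mk, AddHom.coe_mk]
  split_ifs <;> simp only [mul_assoc, add_mul, smul_mul_assoc]

end OperatorsT

section OperatorX

variable {k : Type} [Field k] {m : ℕ} {P : Type} [Ring P] [Algebra k P]

/-- `q` times the inverse of the generator. -/
def Sop (q : k) (G : ℕ → P) (l : ℕ) : P := G l - (q - 1) • (1 : P)

/-- The products `S_1 ⋯ S_j`. -/
def sh (q : k) (G : ℕ → P) : ℕ → P
  | 0 => 1
  | j + 1 => sh q G j * Sop q G (j + 1)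

variable {v : Fin m → k} {q : k} {N : ℕ} {G : ℕ → P}

theorem mul_Sop (hG : Sat v q N G) {l : ℕ} (h1 : 1 ≤ l) (h : l < N) :
    G l * Sop q G l = q • (1 : P) := by
  rw [Sop, mul_sub, hG.quad l h1 h, mul_smul_comm, mul_one]; abel

theorem Sop_mul (hG : Sat v q N G) {l : ℕ} (h1 : 1 ≤ l) (h : l < N) :
    Sop q G l * G l = q • (1 : P) := by
  rw [Sop, sub_mul, hG.quad l h1 h, smul_mul_assoc, one_mul]; abel

theorem commute_Sop {x : P} {l : ℕ} (h : Commute x (G l)) : Commute x (Sop q G l) := by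
  rw [Sop]
  exact h.sub_right ((Commute.one_right x).smul_right _)

theorem commute_sh {x : P} {j : ℕ} (h : ∀ l, 1 ≤ l → l ≤ j → Commute x (G l)) :
    Commute x (sh q G j) := by
  induction j with
  | zero => exact Commute.one_right x
  | succ j ih =>
    exact (ih fun l h1 h2 => h l h1 (by omega)).mul_right
      (commute_Sop (h _ (by omega) le_rfl))

theorem sh_succ_add (j : ℕ) : sh q G (j + 1) + (q - 1) • sh q G j = sh q G j * G (j + 1) := by
  rw [sh, Sop, mul_sub, mul_smul_comm, mul_one]; abel

theorem sh_succ_mul (hG : Sat v q N G) {j : ℕ} (h : j + 1 < N) :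
    sh q G (j + 1) * G (j + 1) = q • sh q G j := by
  rw [sh, mul_assoc, Sop_mul hG (by omega) h, mul_smul_comm, mul_one]

theorem braid_Sop (hG : Sat v q N G) {a : ℕ} (h1 : 1 ≤ a) (h : a + 1 < N) :
    G (a + 1) * (Sop q G a * Sop q G (a + 1)) = Sop q G a * Sop q G (a + 1) * G a := by
  have h1 := hG.braid a h1 h
  have h2 := hG.quad a (by omega) (by omega)
  have h3 := hG.quad (a + 1) (by omega) (by omega)
  simp only [Sop, mul_sub, sub_mul, mul_smul_comm, smul_mul_assoc, mul_one, one_mul, ← mul_assoc,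
    h1, h2, h3]
  module

theorem G_mul_sh (hG : Sat v q N G) {a j : ℕ} (h1 : 1 ≤ a) (haj : a + 1 ≤ j) (hj : j < N) :
    G (a + 1) * sh q G j = sh q G j * G a := by
  induction j with
  | zero => omega
  | succ j ih =>
    rcases Nat.lt_or_ge a j with h | h
    · rw [sh, ← mul_assoc, ih (by omega) (by omega), mul_assoc, mul_assoc,
        (commute_Sop (q := q) (show Commute (G a) (G (j + 1)) from
          hG.comm _ _ (by omega) (by omega))).eq]
    · obtain rfl : a = j := by omega
      obtain ⟨b, rfl⟩ : ∃ b, a = b + 1 := ⟨a - 1, by omega⟩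
      have hc : Commute (G (b + 1 + 1)) (sh q G b) :=
        commute_sh fun l h1 h2 => (hG.comm l _ (by omega) (by omega)).symm
      rw [sh, sh, mul_assoc, ← mul_assoc (G _), hc.eq, mul_assoc, braid_Sop hG h1 hj]
      simp only [mul_assoc]

/-- The tail `S_2 ⋯ S_{j+1}` of the product `S_1 ⋯ S_{j+1}`. -/
theorem sh_tail (hG : Sat v q N G) (j : ℕ) (hj : j + 1 < N) :
    ∃ t : P, sh q G (j + 1) = Sop q G 1 * t ∧ Commute t (G 0) := by
  induction j with
  | zero => exact ⟨1, by simp [sh], Commute.one_left _⟩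
  | succ j ih =>
    obtain ⟨t, h1, h2⟩ := ih (by omega)
    refine ⟨t * Sop q G (j + 1 + 1), by rw [sh, h1, mul_assoc], h2.mul_left ?_⟩
    exact (commute_Sop (hG.comm 0 _ (by omega) hj)).symm

/-- Axioms for the data entering in the definition of the operator `X`. -/
structure Dat (N : ℕ) (G : ℕ → P) (z f K : P) (Λ : P →ₗ[k] P) : Prop where
  hz : ∀ x, z * x = x * z
  hf : ∀ x, f * x = x * f
  hK : 0 < N → ∀ x, Commute x (G 0) → Commute x K
  zK : 0 < N → z * K = f + G 0 * K
  hΛ : ∀ l p, Λ (G l * p) = G l * Λ p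
  hΛK : ∀ p, Λ (K * Λ p) = Λ p

/-- The action of `a_1` on the induced module. -/
def opX (q : k) (N : ℕ) (G : ℕ → P) (z f K : P) (Λ : P →ₗ[k] P) : (ℕ → P) →ₗ[k] (ℕ → P) where
  toFun w i := if N < i then 0 else if i = 0 then z * w 0 - f * Λ (w 0) else
    G 0 * w i - (q - 1) • (z * (sh q G (i - 1) * w 0 - K * (sh q G (i - 1) * Λ (w 0))))
  map_add' x y := by
    funext i
    simp only [Pi.add_apply, map_add]
    split_ifs
    · simp
    · simp only [mul_add]; abel
    · simp only [mul_add, mul_sub, smul_add, smul_sub]; abel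
  map_smul' c x := by
    funext i
    simp only [Pi.smul_apply, RingHom.id_apply, map_smul]
    split_ifs
    · simp
    · simp only [mul_smul_comm, smul_sub]
    · simp only [mul_smul_comm, smul_sub, mul_sub]
      module

variable {z f K : P} {Λ : P →ₗ[k] P}

theorem opX_zero (w : ℕ → P) : opX q N G z f K Λ w 0 = z * w 0 - f * Λ (w 0) := by
  simp [opX]

theorem opX_gt (w : ℕ → P) {i : ℕ} (h : N < i) : opX q N G z f K Λ w i = 0 := by
  simp [opX, h]

theorem opX_succ (w : ℕ → P) {j : ℕ} (h : j + 1 ≤ N) : opX q N G z f K Λ w (j + 1) =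
    G 0 * w (j + 1) - (q - 1) • (z * (sh q G j * w 0 - K * (sh q G j * Λ (w 0)))) := by
  have : ¬ N < j + 1 := by omega
  simp [opX, this]

theorem opX_T_comm (hG : Sat v q N G) (hD : Dat N G z f K Λ) {a i : ℕ} (h1 : 1 ≤ a)
    (ha : a + 1 ≤ N) (hi : i ≤ N) (w : ℕ → P) :
    opT q G a (opX q N G z f K Λ w) i = opX q N G z f K Λ (opT q G a w) i := by
  have e0 : opT q G a w 0 = G a * w 0 := opT_lt w h1
  have hzl : ∀ x y, x * (z * y) = z * (x * y) := fun x y => by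
    rw [← mul_assoc, ← hD.hz, mul_assoc]
  have hfl : ∀ x y, x * (f * y) = f * (x * y) := fun x y => by
    rw [← mul_assoc, ← hD.hf, mul_assoc]
  rcases i with _ | j
  · rw [opT_lt _ h1, opX_zero, opX_zero, e0, hD.hΛ, mul_sub, hzl, hfl]
  rcases lt_trichotomy (j + 1) a with h | rfl | h
  · rw [opT_lt _ h, opX_succ _ hi, opX_succ _ hi, e0, hD.hΛ, opT_lt _ h]
    have c0 : Commute (G a) (G 0) := (hG.comm 0 a (by omega) (by omega)).symm
    have cK := hD.hK (by omega) _ c0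
    have cs : Commute (G a) (sh q G j) :=
      commute_sh fun l h1 h2 => (hG.comm l a (by omega) (by omega)).symm
    have cs' : ∀ y, G a * (sh q G j * y) = sh q G j * (G a * y) := fun y => by
      rw [← mul_assoc, cs.eq, mul_assoc]
    have cK' : ∀ y, G a * (K * y) = K * (G a * y) := fun y => by
      rw [← mul_assoc, cK.eq, mul_assoc]
    have c0' : ∀ y, G a * (G 0 * y) = G 0 * (G a * y) := fun y => by
      rw [← mul_assoc, c0.eq, mul_assoc]
    rw [mul_sub, mul_smul_comm, hzl, mul_sub, cs', cK', cs', c0']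
  · rw [opT_self, opX_succ _ ha, opX_succ _ hi, opX_succ _ hi, e0, hD.hΛ, opT_self]
    have := sh_succ_add (q := q) (G := G) j
    have t : ∀ x, sh q G j * (G (j + 1) * x) = (sh q G (j + 1) + (q - 1) • sh q G j) * x :=
      fun x => by rw [this, mul_assoc]
    rw [t, t]
    simp only [mul_sub, mul_add, add_mul, smul_mul_assoc, mul_smul_comm]
    module
  rcases Nat.lt_or_ge (a + 1) (j + 1) with h' | h'
  · rw [opT_gt _ h', opX_succ _ hi, opX_succ _ hi, e0, hD.hΛ, opT_gt _ h']
    have c0 : Commute (G (a + 1)) (G 0) := (hG.comm 0 (a + 1) (by omega) (by omega)).symm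
    have cK := hD.hK (by omega) _ c0
    have cs := G_mul_sh hG h1 (show a + 1 ≤ j by omega) (by omega)
    have cs' : ∀ y, G (a + 1) * (sh q G j * y) = sh q G j * (G a * y) := fun y => by
      rw [← mul_assoc, cs, mul_assoc]
    have cK' : ∀ y, G (a + 1) * (K * y) = K * (G (a + 1) * y) := fun y => by
      rw [← mul_assoc, cK.eq, mul_assoc]
    have c0' : ∀ y, G (a + 1) * (G 0 * y) = G 0 * (G (a + 1) * y) := fun y => by
      rw [← mul_assoc, c0.eq, mul_assoc]
    rw [mul_sub, mul_smul_comm, hzl, mul_sub, cs', cK', cs', c0']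
  · obtain rfl : j = a := by omega
    obtain ⟨b, rfl⟩ : ∃ b, j = b + 1 := ⟨j - 1, by omega⟩
    rw [opT_succ, opX_succ _ (by omega), opX_succ _ hi, e0, hD.hΛ, opT_succ]
    rw [← mul_assoc (sh q G _), ← mul_assoc (sh q G (b + 1)) _ (Λ (w 0)),
      sh_succ_mul hG (by omega)]
    simp only [mul_sub, smul_mul_assoc, mul_smul_comm]
    module

/-- The key identity for the braid relation of length four. -/
theorem key_identity (hq : q ≠ 0) (hG : Sat v q N G) (hD : Dat N G z f K Λ) (h : 1 < N) :
    G 0 * G 1 * K * Sop q G 1 = Sop q G 1 * K * G 1 * G 0 := by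
  have c : Commute (G 1 * G 0 * G 1) (G 0) := by
    have := hG.braid0 h
    show _ = _
    rw [← this]; simp only [mul_assoc]
  have cK := hD.hK (by omega) _ c
  have e1 := mul_Sop hG le_rfl h
  have e2 := Sop_mul hG le_rfl h
  have e : q • (G 1 * G 0 * G 1 * K) = q • (K * (G 1 * G 0 * G 1)) := by rw [cK.eq]
  have e3 : Sop q G 1 * (q • (G 1 * G 0 * G 1 * K)) * Sop q G 1 =
      (q * q) • (G 0 * G 1 * K * Sop q G 1) := by
    rw [mul_smul_comm, ← mul_assoc, ← mul_assoc, ← mul_assoc, e2]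
    simp only [smul_mul_assoc, one_mul, smul_smul]
  have e4 : Sop q G 1 * (q • (K * (G 1 * G 0 * G 1))) * Sop q G 1 =
      (q * q) • (Sop q G 1 * K * G 1 * G 0) := by
    have : Sop q G 1 * (K * (G 1 * G 0 * G 1)) * Sop q G 1 =
      Sop q G 1 * K * G 1 * G 0 * (G 1 * Sop q G 1) := by simp only [mul_assoc]
    rw [mul_smul_comm, smul_mul_assoc, this, e1, mul_smul_comm, mul_one, smul_smul]
  have e5 := e3.symm.trans ((congrArg (fun x => Sop q G 1 * x * Sop q G 1) e).trans e4)
  exact smul_right_injective P (mul_ne_zero hq hq) e5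

theorem opX_braid (hq : q ≠ 0) (hG : Sat v q N G) (hD : Dat N G z f K Λ) (hN : 1 ≤ N) {i : ℕ}
    (hi : i ≤ N) (u : ℕ → P) (hu : u 0 = 0) :
    opX q N G z f K Λ (opT q G 0 (opX q N G z f K Λ (opT q G 0 u))) i =
      opT q G 0 (opX q N G z f K Λ (opT q G 0 (opX q N G z f K Λ u))) i := by
  have hzl : ∀ x y, x * (z * y) = z * (x * y) := fun x y => by
    rw [← mul_assoc, ← hD.hz, mul_assoc]
  have hfl : ∀ x y, x * (f * y) = f * (x * y) := fun x y => by
    rw [← mul_assoc, ← hD.hf, mul_assoc]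
  have zK := hD.zK hN
  have KG : ∀ y, K * (G 0 * y) = G 0 * (K * y) := fun y => by
    rw [← mul_assoc, ← (hD.hK hN _ (Commute.refl _)).eq, mul_assoc]
  set X := opX q N G z f K Λ with hX
  set T := opT q G 0 with hT
  -- the composite `T X T`
  have W0 : ∀ u : ℕ → P, u 0 = 0 → T (X (T u)) 0 = (q - 1) • (G 0 * (K * Λ (u 1))) := by
    intro u hu
    have t0 : T u 0 = u 1 := by rw [hT, opT_self, hu]; simp
    have t1 : T u 1 = 0 := by rw [hT, opT_succ, hu]; simp
    have x0 : X (T u) 0 = z * u 1 - f * Λ (u 1) := by rw [hX, opX_zero, t0]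
    have x1 : X (T u) 1 = - ((q - 1) • (z * u 1 - z * K * Λ (u 1))) := by
      rw [hX, opX_succ _ hN, t0, t1]; simp [sh, mul_sub, mul_assoc]
    have : T (X (T u)) 0 = X (T u) 1 + (q - 1) • X (T u) 0 := opT_self _
    rw [this, x0, x1, zK, add_mul, mul_assoc]
    module
  have W1 : ∀ u : ℕ → P, u 0 = 0 → T (X (T u)) 1 = q • (z * u 1 - f * Λ (u 1)) := by
    intro u hu
    have t0 : T u 0 = u 1 := by rw [hT, opT_self, hu]; simp
    have x0 : X (T u) 0 = z * u 1 - f * Λ (u 1) := by rw [hX, opX_zero, t0]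
    have : T (X (T u)) 1 = q • X (T u) 0 := opT_succ _
    rw [this, x0]
  have W2 : ∀ u : ℕ → P, u 0 = 0 → ∀ j, j + 2 ≤ N → T (X (T u)) (j + 2) =
      G 1 * (G 0 * (G 1 * u (j + 2)) -
        (q - 1) • (z * (sh q G (j + 1) * u 1 - K * (sh q G (j + 1) * Λ (u 1))))) := by
    intro u hu j hj
    have t0 : T u 0 = u 1 := by rw [hT, opT_self, hu]; simp
    have t2 : T u (j + 2) = G 1 * u (j + 2) := by rw [hT, opT_gt _ (by omega)]
    have : T (X (T u)) (j + 2) = G 1 * X (T u) (j + 2) := opT_gt _ (by omega)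
    rw [this, hX, opX_succ _ hj, t0, t2]
  have xu0 : X u 0 = 0 := by rw [hX, opX_zero, hu]; simp
  have xu : ∀ j, j + 1 ≤ N → X u (j + 1) = G 0 * u (j + 1) := by
    intro j hj; rw [hX, opX_succ _ hj, hu]; simp
  have xu1 : X u 1 = G 0 * u 1 := xu 0 hN
  have L0 : Λ (T (X (T u)) 0) = (q - 1) • (G 0 * Λ (u 1)) := by
    rw [W0 u hu, map_smul, hD.hΛ, hD.hΛK]
  rcases i with _ | j
  · rw [hX, opX_zero, ← hX, L0, W0 u hu, W0 _ xu0, xu1, hD.hΛ, mul_smul_comm, mul_smul_comm,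
      ← hzl, ← mul_assoc z, zK, KG, ← smul_sub, ← hfl, ← mul_sub, add_mul, add_sub_cancel_left,
      mul_assoc]
  rcases j with _ | j
  · rw [hX, opX_succ _ hi, ← hX, L0, W1 u hu, W1 _ xu0, xu1, hD.hΛ, W0 u hu]
    simp only [sh, one_mul, mul_smul_comm, KG, sub_self, mul_zero, smul_zero, sub_zero, mul_sub,
      hzl, hfl]
  · rw [hX, opX_succ _ hi, ← hX, L0, W2 u hu j hi, W2 _ xu0 j hi, xu1, hD.hΛ, W0 u hu,
      xu (j + 1) hi]
    have h1N : 1 < N := by omega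
    obtain ⟨t, ht, ct⟩ := sh_tail (q := q) hG j (by omega)
    have ctK := hD.hK hN t ct
    have key := key_identity hq hG hD h1N
    have b0 := hG.braid0 h1N
    have g1s : G 1 * sh q G (j + 1) = q • t := by
      rw [ht, ← mul_assoc, mul_Sop hG le_rfl h1N, smul_mul_assoc, one_mul]
    have A1 : G 0 * (G 1 * (G 0 * (G 1 * u (j + 2)))) = G 1 * (G 0 * (G 1 * (G 0 * u (j + 2)))) := by
      simp only [← mul_assoc, b0]
    have A2 : G 0 * (G 1 * (sh q G (j + 1) * u 1)) = G 1 * (sh q G (j + 1) * (G 0 * u 1)) := by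
      rw [← mul_assoc (G 1), ← mul_assoc (G 1), g1s, smul_mul_assoc, smul_mul_assoc,
        mul_smul_comm, ← mul_assoc, ← mul_assoc, ct.eq]
    have A3 : ∀ c, G 0 * (G 1 * (K * (sh q G (j + 1) * c))) +
        (q - 1) • (K * (sh q G (j + 1) * (G 0 * c))) =
        G 1 * (K * (sh q G (j + 1) * (G 0 * c))) +
        (q - 1) • (sh q G (j + 1) * (G 0 * (K * c))) := by
      intro c
      have r1 : G 0 * (G 1 * (K * (sh q G (j + 1) * c))) =
          Sop q G 1 * K * G 1 * G 0 * t * c := by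
        rw [← key, ht]; simp only [mul_assoc]
      have r2 : sh q G (j + 1) * (G 0 * (K * c)) = Sop q G 1 * K * G 0 * t * c := by
        rw [ht, ← KG]
        calc _ = Sop q G 1 * (t * K) * (G 0 * c) := by simp only [mul_assoc]
          _ = Sop q G 1 * K * (t * G 0) * c := by rw [ctK.eq]; simp only [mul_assoc]
          _ = _ := by rw [ct.eq]; simp only [mul_assoc]
      have r3 : K * (sh q G (j + 1) * (G 0 * c)) = K * Sop q G 1 * G 0 * t * c := by
        calc _ = K * Sop q G 1 * (t * G 0) * c := by rw [ht]; simp only [mul_assoc]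
          _ = _ := by rw [ct.eq]; simp only [mul_assoc]
      have r4 : G 1 = Sop q G 1 + (q - 1) • (1 : P) := by rw [Sop]; abel
      rw [r1, r2, r3, r4]
      simp only [mul_add, add_mul, mul_smul_comm, smul_mul_assoc, mul_one, one_mul, mul_assoc,
        sub_mul]
      try abel
    have A3' := congrArg (fun x => (q - 1) • (z * x)) (A3 (Λ (u 1)))
    simp only [mul_sub, mul_smul_comm, hzl, A1, A2, mul_add, smul_sub] at A3' ⊢
    linear_combination (norm := module) A3'

end OperatorX

section InducedModule

open Polynomial

variable {k : Type} [Field k] {m : ℕ}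

theorem Sat.map {A B : Type} [Ring A] [Algebra k A] [Ring B] [Algebra k B] {v : Fin m → k} {q : k}
    {N : ℕ} {g : ℕ → A} (h : Sat v q N g) (φ : A →ₐ[k] B) : Sat v q N (fun l => φ (g l)) where
  cyclo hN := by
    have := congrArg φ (h.cyclo hN)
    rw [map_list_prod, map_zero, List.map_map] at this
    rw [← this]
    congr 2
    funext a
    simp
  quad l h1 h2 := by rw [← map_mul, h.quad l h1 h2]; simp
  braid0 hN := by simp only [← map_mul]; rw [h.braid0 hN]
  comm i j h1 h2 := by simp only [← map_mul]; rw [h.comm i j h1 h2]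
  braid i h1 h2 := by simp only [← map_mul]; rw [h.braid i h1 h2]

theorem Sat.mono {A : Type} [Ring A] [Algebra k A] {v : Fin m → k} {q : k}
    {N N' : ℕ} {g : ℕ → A} (h : Sat v q N g) (hN : N' ≤ N) : Sat v q N' g where
  cyclo h1 := h.cyclo (by omega)
  quad l h1 h2 := h.quad l h1 (by omega)
  braid0 h1 := h.braid0 (by omega)
  comm i j h1 h2 := h.comm i j h1 (by omega)
  braid i h1 h2 := h.braid i h1 (by omega)

variable {B : Type} [Ring B] [Algebra k B]

/-- The polynomial `∏ (X - a)`. -/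
def fP (B : Type) [Ring B] [Algebra k B] (L : List k) : B[X] :=
  (L.map fun a => X - C (algebraMap k B a)).prod

theorem fP_cons (a : k) (L : List k) : fP B (a :: L) = (X - C (algebraMap k B a)) * fP B L := by
  simp [fP]

theorem comm_X_sub (a : k) (x : B[X]) : Commute x (X - C (algebraMap k B a)) :=
  Commute.sub_right (X_mul (p := x)).symm (Algebra.commutes a x).symm

theorem fP_comm (L : List k) (x : B[X]) : Commute (fP B L) x := by
  induction L with
  | nil => simp [fP]
  | cons a L ih => rw [fP_cons]; exact (comm_X_sub a x).symm.mul_left ih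

theorem fP_coeff (L : List k) : (∀ j, L.length < j → (fP B L).coeff j = 0) ∧
    (fP B L).coeff L.length = 1 := by
  induction L with
  | nil =>
    refine ⟨fun j hj => ?_, ?_⟩
    · have : j ≠ 0 := by simp at hj; omega
      simp [fP, coeff_one, this]
    · simp [fP]
  | cons a L ih =>
    constructor
    · rintro (_ | j) hj
      · simp at hj
      · rw [List.length_cons] at hj
        rw [fP_cons, sub_mul, coeff_sub, coeff_X_mul, coeff_C_mul, ih.1 j (by omega),
          ih.1 (j + 1) (by omega)]
        simp
    · rw [List.length_cons, fP_cons, sub_mul, coeff_sub, coeff_X_mul, coeff_C_mul, ih.2,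
          ih.1 _ (by omega)]
      simp

theorem fP_monic (L : List k) : (fP B L).Monic := by
  induction L with
  | nil => simp [fP]
  | cons a L ih => rw [fP_cons]; exact (monic_X_sub_C _).mul ih

theorem fP_mul_eq_zero {L : List k} {p : B[X]}
    (h : ∀ j, L.length ≤ j → (fP B L * p).coeff j = 0) : fP B L * p = 0 := by
  by_contra hne
  have hp : p ≠ 0 := fun h => hne (by rw [h, mul_zero])
  have hnt : Nontrivial B := by
    by_contra hn
    rw [not_nontrivial_iff_subsingleton] at hn
    exact hp (Subsingleton.elim _ _)
  have hd := (fP_monic (B := B) L).natDegree_mul' hp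
  have hl : L.length ≤ (fP B L).natDegree := by
    apply le_natDegree_of_ne_zero
    rw [(fP_coeff L).2]; exact one_ne_zero
  have := h (fP B L * p).natDegree (by omega)
  rw [coeff_natDegree, leadingCoeff_eq_zero] at this
  exact hne this

/-- The quotient of `f(X) - f(y)` by `X - y`. -/
def KP (y : B) : List k → B[X]
  | [] => 0
  | a :: L => fP B L + C (y - algebraMap k B a) * KP y L

theorem KP_mul (y : B) (L : List k) : X * KP y L =
    fP B L - C ((L.map fun a => y - algebraMap k B a).prod) + C y * KP y L := by
  induction L with
  | nil => simp [KP, fP]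
  | cons a L ih =>
    rw [KP, List.map_cons, List.prod_cons, C_mul, fP_cons, mul_add, ← mul_assoc X, X_mul_C,
      mul_assoc _ X, ih]
    have e : C y * (C (y - algebraMap k B a) * KP y L) = C (y - algebraMap k B a) * (C y * KP y L) := by
      rw [← mul_assoc, ← mul_assoc, ← C_mul, ← C_mul, mul_sub, sub_mul, Algebra.commutes]
    rw [mul_add (C y), e]
    simp only [mul_add, mul_sub, sub_mul, C_sub]
    abel

theorem KP_commute (y : B) (L : List k) (x : B[X]) (h : Commute x (C y)) :
    Commute x (KP y L) := by
  induction L with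
  | nil => exact Commute.zero_right _
  | cons a L ih =>
    rw [KP, C_sub]
    exact (fP_comm L x).symm.add_right
      ((h.sub_right (Algebra.commutes a x).symm).mul_right ih)

theorem KP_coeff (y : B) (L : List k) : (∀ j, L.length ≤ j → (KP y L).coeff j = 0) ∧
    (0 < L.length → (KP y L).coeff (L.length - 1) = 1) := by
  induction L with
  | nil => simp [KP]
  | cons a L ih =>
    refine ⟨fun j hj => ?_, fun _ => ?_⟩
    · rw [List.length_cons] at hj
      rw [KP, coeff_add, coeff_C_mul, ih.1 j (by omega), (fP_coeff L).1 j (by omega)]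
      simp
    · rw [List.length_cons, Nat.add_sub_cancel, KP, coeff_add, coeff_C_mul, ih.1 _ le_rfl,
        (fP_coeff L).2]
      simp

/-- The coefficient of degree `m - 1`, as a constant polynomial. -/
def LamP (B : Type) [Ring B] [Algebra k B] (m : ℕ) : B[X] →ₗ[k] B[X] where
  toFun p := C (p.coeff (m - 1))
  map_add' x y := by simp
  map_smul' c x := by simp [smul_C]

theorem LamP_apply (p : B[X]) : LamP (k := k) B m p = C (p.coeff (m - 1)) := rfl

variable (v : Fin m → k) (q : k) (N : ℕ) (g : ℕ → B)

/-- The operators of the generators. -/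
def opG : ℕ → ((ℕ → B[X]) →ₗ[k] (ℕ → B[X]))
  | 0 => opX q N (fun l => C (g l)) X (fP B (List.ofFn v)) (KP (g 0) (List.ofFn v)) (LamP B m)
  | l + 1 => opT q (fun l => C (g l)) l

/-- The induced module. -/
def MM (k B : Type) [Field k] [Ring B] [Algebra k B] (m N : ℕ) : Submodule k (ℕ → B[X]) where
  carrier := {w | (∀ i, N < i → w i = 0) ∧ ∀ i j, m ≤ j → (w i).coeff j = 0}
  add_mem' := by
    rintro a b ⟨ha, ha'⟩ ⟨hb, hb'⟩
    exact ⟨fun i hi => by simp [ha i hi, hb i hi], fun i j h => by simp [ha' i j h, hb' i j h]⟩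
  zero_mem' := ⟨fun i hi => rfl, fun i j h => by simp⟩
  smul_mem' := by
    rintro c a ⟨ha, ha'⟩
    exact ⟨fun i hi => by simp [ha i hi], fun i j h => by simp [ha' i j h]⟩

/-- The action of the generators on the induced module. -/
def act (l : ℕ) : Module.End k (MM k B m N) :=
  if h : ∀ w ∈ MM k B m N, opG v q N g l w ∈ MM k B m N then (opG v q N g l).restrict h else 0

variable {v q N g}

theorem sat_C (hg : Sat v q N g) : Sat v q N (fun l => (C (g l) : B[X])) := hg.map CAlgHom

theorem dat_C (hg : Sat v q N g) (hm : 0 < m) : Dat (k := k) N (fun l => (C (g l) : B[X])) X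
    (fP B (List.ofFn v)) (KP (g 0) (List.ofFn v)) (LamP B m) where
  hz x := X_mul
  hf x := (fP_comm _ x).eq
  hK hN x hx := KP_commute _ _ x hx
  zK hN := by rw [KP_mul, hg.cyclo hN]; simp
  hΛ l p := by simp [LamP_apply]
  hΛK p := by
    rw [LamP_apply, LamP_apply, coeff_mul_C]
    have := (KP_coeff (g 0) (List.ofFn v)).2 (by simpa using hm)
    rw [List.length_ofFn] at this
    rw [this, one_mul]

theorem opG_mem (hg : Sat v q N g) (hm : 0 < m) {l : ℕ} (hl : l ≤ N) (w : ℕ → B[X])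
    (hw : w ∈ MM k B m N) : opG v q N g l w ∈ MM k B m N := by
  obtain ⟨h1, h2⟩ := hw
  have hlen : (List.ofFn v).length = m := by simp
  have cs : ∀ j, ∃ b : B, sh q (fun l => (C (g l) : B[X])) j = C b := by
    intro j
    induction j with
    | zero => exact ⟨1, by simp [sh]⟩
    | succ j ih =>
      obtain ⟨b, hb⟩ := ih
      refine ⟨b * (g (j + 1) - (q - 1) • 1), ?_⟩
      rw [sh, hb, Sop, C_mul, C_sub, ← smul_C, C_1]
  rcases l with _ | l
  · refine ⟨fun i hi => by rw [opG, opX_gt w hi], ?_⟩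
    rintro i j hj
    obtain ⟨j, rfl⟩ : ∃ j', j = j' + 1 := ⟨j - 1, by omega⟩
    rcases Nat.lt_or_ge N i with hi | hi
    · rw [opG, opX_gt w hi, coeff_zero]
    rcases i with _ | i
    · rw [opG, opX_zero, coeff_sub, coeff_X_mul, LamP_apply, coeff_mul_C]
      rcases Nat.lt_or_ge m (j + 1) with h | h
      · rw [h2 0 j (by omega), (fP_coeff _).1 _ (by rw [hlen]; omega)]; simp
      · have e : j + 1 = m := by omega
        have e' : j = m - 1 := by omega
        have := (fP_coeff (B := B) (List.ofFn v)).2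
        rw [hlen] at this
        rw [e, this, e']; simp
    · obtain ⟨b, hb⟩ := cs i
      rw [opG, opX_succ _ hi, coeff_sub, coeff_smul, coeff_X_mul, LamP_apply, hb, coeff_C_mul,
        coeff_sub, coeff_C_mul, ← C_mul, coeff_mul_C, h2 _ (j + 1) hj]
      rcases Nat.lt_or_ge m (j + 1) with h | h
      · rw [h2 0 j (by omega), (KP_coeff _ _).1 _ (by rw [hlen]; omega)]; simp
      · have e' : j = m - 1 := by omega
        have := (KP_coeff (g 0) (List.ofFn v)).2 (by omega)
        rw [hlen] at this
        rw [e', this]; simp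
  · rw [opG]
    have key : ∀ i, (opT q (fun l => (C (g l) : B[X])) l w i = 0 ∨ i ≤ N) ∧
        ∀ j, m ≤ j → (opT q (fun l => (C (g l) : B[X])) l w i).coeff j = 0 := by
      intro i
      rcases lt_trichotomy i l with h | rfl | h
      · rw [opT_lt _ h]
        exact ⟨Or.inr (by omega), fun j hj => by rw [coeff_C_mul, h2 i j hj, mul_zero]⟩
      · rw [opT_self]
        exact ⟨Or.inr (by omega), fun j hj => by simp [h2 _ j hj]⟩
      rcases Nat.lt_or_ge (l + 1) i with h' | h'
      · rw [opT_gt _ h']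
        refine ⟨?_, fun j hj => by rw [coeff_C_mul, h2 i j hj, mul_zero]⟩
        rcases Nat.lt_or_ge N i with hi | hi
        · left; rw [h1 i hi, mul_zero]
        · exact Or.inr hi
      · obtain rfl : i = l + 1 := by omega
        rw [opT_succ]
        exact ⟨Or.inr (by omega), fun j hj => by simp [h2 _ j hj]⟩
    exact ⟨fun i hi => (key i).1.resolve_right (by omega), fun i j hj => (key i).2 j hj⟩

theorem act_coe (hg : Sat v q N g) (hm : 0 < m) {l : ℕ} (hl : l ≤ N) (w : MM k B m N) :
    (act v q N g l w : ℕ → B[X]) = opG v q N g l w := by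
  rw [act, dif_pos (opG_mem hg hm hl)]; rfl

theorem MM_ext {w w' : MM k B m N} (h : ∀ i, i ≤ N → w.1 i = w'.1 i) : w = w' := by
  apply Subtype.ext
  funext i
  rcases Nat.lt_or_ge N i with hi | hi
  · rw [w.2.1 i hi, w'.2.1 i hi]
  · exact h i hi

theorem act_succ (hg : Sat v q N g) (hm : 0 < m) {l : ℕ} (hl : l + 1 ≤ N) (w : MM k B m N) :
    (act v q N g (l + 1) w : ℕ → B[X]) = opT q (fun l => C (g l)) l w :=
  act_coe hg hm hl w

theorem act_zero (hg : Sat v q N g) (hm : 0 < m) (w : MM k B m N) :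
    (act v q N g 0 w : ℕ → B[X]) = opX q N (fun l => C (g l)) X (fP B (List.ofFn v))
      (KP (g 0) (List.ofFn v)) (LamP B m) w :=
  act_coe hg hm (Nat.zero_le _) w

theorem act_quad (hg : Sat v q N g) (hm : 0 < m) {l : ℕ} (hl : l + 1 ≤ N) (w : MM k B m N) :
    act v q N g (l + 1) (act v q N g (l + 1) w) = (q - 1) • act v q N g (l + 1) w + q • w := by
  apply MM_ext
  intro i hi
  rw [Submodule.coe_add, Submodule.coe_smul, Submodule.coe_smul, act_succ hg hm hl,
    act_succ hg hm hl]
  exact opT_quad (sat_C hg) hl hi w.1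

theorem act_braid0 (hq : q ≠ 0) (hg : Sat v q N g) (hm : 0 < m) (hN : 1 ≤ N) (w : MM k B m N) :
    act v q N g 0 (act v q N g 1 (act v q N g 0 (act v q N g 1 w))) =
      act v q N g 1 (act v q N g 0 (act v q N g 1 (act v q N g 0 w))) := by
  have H : ∀ u : MM k B m N, u.1 0 = 0 →
      act v q N g 0 (act v q N g 1 (act v q N g 0 (act v q N g 1 u))) =
      act v q N g 1 (act v q N g 0 (act v q N g 1 (act v q N g 0 u))) := by
    intro u hu
    apply MM_ext
    intro i hi
    simp only [act_zero hg hm, act_succ hg hm (show 0 + 1 ≤ N from hN)]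
    exact opX_braid hq (sat_C hg) (dat_C hg hm) hN hi u.1 hu
  have H2 : ∀ u : MM k B m N, u.1 0 = 0 →
      act v q N g 0 (act v q N g 1 (act v q N g 0 (act v q N g 1 (act v q N g 1 u)))) =
      act v q N g 1 (act v q N g 0 (act v q N g 1 (act v q N g 0 (act v q N g 1 u)))) := by
    intro u hu
    rw [H u hu, act_quad hg hm (show 0 + 1 ≤ N from hN), act_quad hg hm (show 0 + 1 ≤ N from hN)]
    simp only [map_add, map_smul]
    rw [H u hu]
  let u' : MM k B m N := ⟨Pi.single 1 (w.1 0), by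
    refine ⟨fun i hi => Pi.single_eq_of_ne (by omega) _, fun i j hj => ?_⟩
    rcases eq_or_ne i 1 with rfl | h
    · rw [Pi.single_eq_same]; exact w.2.2 0 j hj
    · rw [Pi.single_eq_of_ne h, coeff_zero]⟩
  have hu' : u'.1 0 = 0 := by simp [u']
  obtain ⟨a, h0, ha⟩ : ∃ a : MM k B m N, a.1 0 = 0 ∧ w = a + act v q N g 1 u' := by
    refine ⟨w - act v q N g 1 u', ?_, by abel⟩
    rw [Submodule.coe_sub, Pi.sub_apply, act_succ hg hm (show 0 + 1 ≤ N from hN), opT_self]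
    simp [u']
  rw [ha]
  simp only [map_add]
  rw [H _ h0, H2 _ hu']

theorem act_cyclo (hg : Sat v q N g) (hm : 0 < m) :
    ((List.ofFn v).map fun a => act v q N g 0 - algebraMap k _ a).prod = 0 := by
  apply LinearMap.ext
  intro w
  have hD := dat_C hg hm
  have hzl : ∀ x y : B[X], x * (X * y) = X * (x * y) := fun x y => by
    rw [← mul_assoc, ← hD.hz, mul_assoc]
  have hfl : ∀ x y : B[X], x * (fP B (List.ofFn v) * y) = fP B (List.ofFn v) * (x * y) :=
    fun x y => by rw [← mul_assoc, ← hD.hf, mul_assoc]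
  have h0 : ∀ L : List k, ∃ r, ((L.map fun a => act v q N g 0 - algebraMap k _ a).prod w).1 0 =
      fP B L * w.1 0 - fP B (List.ofFn v) * r := by
    intro L
    induction L with
    | nil => exact ⟨0, by simp [fP]⟩
    | cons a L ih =>
      obtain ⟨r, hr⟩ := ih
      refine ⟨(X - C (algebraMap k B a)) * r + LamP (k := k) B m
        (((L.map fun a => act v q N g 0 - algebraMap k _ a).prod w).1 0), ?_⟩
      rw [List.map_cons, List.prod_cons, Module.End.mul_apply, LinearMap.sub_apply,
        Submodule.coe_sub, Pi.sub_apply, act_zero hg hm, opX_zero, Module.algebraMap_end_apply,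
        Submodule.coe_smul, Pi.smul_apply, mul_add, ← sub_sub, ← hfl, fP_cons, mul_assoc,
        ← mul_sub, ← hr, sub_mul]
      have : ∀ p : B[X], C (algebraMap k B a) * p = a • p := fun p => by
        rw [Algebra.smul_def]; rfl
      rw [this]; abel
  have hv0 : ((((List.ofFn v).map fun a => act v q N g 0 - algebraMap k _ a).prod w).1 0) = 0 := by
    obtain ⟨r, hr⟩ := h0 (List.ofFn v)
    rw [hr, ← mul_sub]
    apply fP_mul_eq_zero
    intro j hj
    rw [mul_sub, ← hr]
    exact (((List.ofFn v).map fun a => act v q N g 0 - algebraMap k _ a).prod w).2.2 0 j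
      (by simpa using hj)
  apply MM_ext
  intro i hi
  rcases i with _ | j
  · rw [hv0]; rfl
  have hω : ∀ L : List k, ∀ u, u = (L.map fun a => act v q N g 0 - algebraMap k _ a).prod w →
      (X - C (g 0)) * u.1 (j + 1) +
        (q - 1) • (X * (sh q (fun l => C (g l)) j * u.1 0)) =
      (L.map fun a => C (g 0) - algebraMap k B[X] a).prod * ((X - C (g 0)) * w.1 (j + 1) +
        (q - 1) • (X * (sh q (fun l => C (g l)) j * w.1 0))) := by
    intro L
    induction L with
    | nil => rintro u rfl; simp
    | cons a L ih =>
      rintro u rfl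
      have := ih _ rfl
      rw [List.map_cons, List.prod_cons, Module.End.mul_apply, List.map_cons, List.prod_cons,
        mul_assoc, ← this]
      generalize (L.map fun a => act v q N g 0 - algebraMap k _ a).prod w = u
      rw [LinearMap.sub_apply, Submodule.coe_sub, Pi.sub_apply, Pi.sub_apply, act_zero hg hm,
        opX_zero, opX_succ _ hi, Module.algebraMap_end_apply, Submodule.coe_smul, Pi.smul_apply,
        Pi.smul_apply]
      have zK : ∀ x, fP B (List.ofFn v) * x = X * (KP (g 0) (List.ofFn v) * x) -
          C (g 0) * (KP (g 0) (List.ofFn v) * x) := fun x => by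
        rw [← mul_assoc X, hD.zK (by omega), add_mul, mul_assoc]; abel
      have : ∀ p : B[X], algebraMap k B[X] a * p = a • p := fun p => by
        rw [Algebra.smul_def]
      simp only [sub_mul, mul_sub, mul_add, this, mul_smul_comm, hzl (C (g 0)),
        hzl (sh q (fun l => C (g l)) j), hfl (sh q (fun l => C (g l)) j), smul_add]
      simp only [zK, mul_sub, hzl (C (g 0))]
      module
  have := hω (List.ofFn v) _ rfl
  rw [hv0, (sat_C hg).cyclo (by omega), zero_mul, mul_zero, mul_zero, smul_zero, add_zero] at this
  have h3 := (monic_X_sub_C (g 0)).mul_right_eq_zero_iff.mp this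
  rw [h3]; rfl

theorem sat_act (hq : q ≠ 0) (hg : Sat v q N g) (hm : 0 < m) :
    Sat v q (N + 1) (act v q N g) where
  cyclo _ := act_cyclo hg hm
  quad l h1 h2 := by
    obtain ⟨l, rfl⟩ : ∃ l', l = l' + 1 := ⟨l - 1, by omega⟩
    apply LinearMap.ext
    intro w
    exact act_quad hg hm (by omega) w
  braid0 hN := by
    apply LinearMap.ext
    intro w
    exact act_braid0 hq hg hm (by omega) w
  comm i j h1 h2 := by
    obtain ⟨j, rfl⟩ : ∃ l', j = l' + 1 := ⟨j - 1, by omega⟩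
    apply LinearMap.ext
    intro w
    apply MM_ext
    intro c hc
    rw [Module.End.mul_apply, Module.End.mul_apply]
    rcases i with _ | i
    · simp only [act_zero hg hm, act_succ hg hm (show j + 1 ≤ N by omega)]
      exact (opX_T_comm (sat_C hg) (dat_C hg hm) (by omega) (by omega) hc w.1).symm
    · simp only [act_succ hg hm (show j + 1 ≤ N by omega),
        act_succ hg hm (show i + 1 ≤ N by omega)]
      exact opT_comm (sat_C hg) (by omega) (by omega) hc w.1
  braid i h1 h2 := by
    obtain ⟨i, rfl⟩ : ∃ l', i = l' + 1 := ⟨i - 1, by omega⟩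
    apply LinearMap.ext
    intro w
    apply MM_ext
    intro c hc
    simp only [Module.End.mul_apply]
    simp only [act_succ hg hm (show i + 1 + 1 ≤ N by omega),
        act_succ hg hm (show i + 1 ≤ N by omega)]
    exact opT_braid (sat_C hg) (by omega) hc w.1

end InducedModule

section Expectation

open Polynomial

variable {k : Type} [Field k] {m : ℕ} (v : Fin m → k) (q : k)

/-- The natural map from `H_N` to `H_{N+1}`. -/
def io (N : ℕ) : CH k m N v q →ₐ[k] CH k m (N + 1) v q :=
  liftH ((sat_gg v q (N + 1)).mono (Nat.le_succ N))

theorem io_gg {N l : ℕ} (hl : l < N) : io v q N (gg v q N l) = gg v q (N + 1) l :=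
  liftH_gg _ hl

variable [hq : Fact (q ≠ 0)] [hm : NeZero m]

/-- The action on the induced module. -/
def rho (N : ℕ) : CH k m (N + 1) v q →ₐ[k] Module.End k (MM k (CH k m N v q) m N) :=
  liftH (sat_act hq.out (sat_gg v q N) (NeZero.pos m))

theorem rho_gg {N l : ℕ} (hl : l ≤ N) : rho v q N (gg v q (N + 1) l) = act v q N (gg v q N) l :=
  liftH_gg _ (by omega)

theorem rho_succ {N l : ℕ} (hl : l + 1 ≤ N) (w : MM k (CH k m N v q) m N) :
    (rho v q N (gg v q (N + 1) (l + 1)) w).1 = opT q (fun l => C (gg v q N l)) l w.1 := by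
  rw [rho_gg v q hl, act_succ (sat_gg v q N) (NeZero.pos m) hl]

theorem rho_zero {N : ℕ} (w : MM k (CH k m N v q) m N) :
    (rho v q N (gg v q (N + 1) 0) w).1 = opX q N (fun l => C (gg v q N l)) X
      (fP _ (List.ofFn v)) (KP (gg v q N 0) (List.ofFn v)) (LamP _ m) w.1 := by
  rw [rho_gg v q (Nat.zero_le _), act_zero (sat_gg v q N) (NeZero.pos m)]

/-- Right multiplication on the induced module. -/
def rmul {N : ℕ} (b : CH k m N v q) :
    Module.End k (MM k (CH k m N v q) m N) where
  toFun w := ⟨fun i => w.1 i * C b, fun i hi => by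
    show w.1 i * C b = 0
    rw [w.2.1 i hi, zero_mul], fun i j hj => by
    show (w.1 i * C b).coeff j = 0
    rw [coeff_mul_C, w.2.2 i j hj, zero_mul]⟩
  map_add' x y := by apply Subtype.ext; funext i; simp [add_mul]
  map_smul' c x := by apply Subtype.ext; funext i; simp

theorem rmul_coe {N : ℕ} (b : CH k m N v q) (w : MM k (CH k m N v q) m N) (i : ℕ) :
    (rmul v q b w).1 i = w.1 i * C b := rfl

theorem opX_mul_right {N : ℕ} {B : Type} [Ring B] [Algebra k B] (G : ℕ → B[X]) (f K : B[X])
    (w : ℕ → B[X]) (b : B) (i : ℕ) :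
    opX q N G X f K (LamP B m) (fun j => w j * C b) i = opX q N G X f K (LamP B m) w i * C b := by
  have e : ∀ p : B[X], LamP (k := k) B m (p * C b) = LamP (k := k) B m p * C b := by
    intro p; simp [LamP_apply]
  rcases Nat.lt_or_ge N i with hi | hi
  · rw [opX_gt _ hi, opX_gt _ hi, zero_mul]
  rcases i with _ | i
  · rw [opX_zero, opX_zero, e, sub_mul]; simp only [mul_assoc]
  · rw [opX_succ _ hi, opX_succ _ hi, e]
    simp only [sub_mul, mul_sub, smul_mul_assoc, mul_assoc]

theorem rho_rmul {N : ℕ} (h : CH k m (N + 1) v q) (b : CH k m N v q)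
    (w : MM k (CH k m N v q) m N) :
    rho v q N h (rmul v q b w) = rmul v q b (rho v q N h w) := by
  induction h using ind_gg generalizing w with
  | halg c => rw [AlgHom.commutes]; simp [Module.algebraMap_end_apply]
  | hgen l hl =>
    apply MM_ext
    intro i hi
    rw [rmul_coe]
    rcases l with _ | l
    · rw [rho_zero, rho_zero]
      exact opX_mul_right q _ _ _ w.1 b i
    · rw [rho_succ v q (by omega), rho_succ v q (by omega)]
      exact opT_mul_right l w.1 (C b) i
  | hmul x y hx hy => rw [map_mul, Module.End.mul_apply, hy, hx]; rfl
  | hadd x y hx hy => rw [map_add, LinearMap.add_apply, hx, hy]; simp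

/-- The element of the induced module concentrated in component `j ≤ N`. -/
def ej {N : ℕ} (j : ℕ) (p : (CH k m N v q)[X]) (hj : j ≤ N) (hp : ∀ j, m ≤ j → p.coeff j = 0) :
    MM k (CH k m N v q) m N :=
  ⟨Pi.single j p, fun i hi => Pi.single_eq_of_ne (by omega) _, fun i s hs => by
    rcases eq_or_ne i j with rfl | h
    · rw [Pi.single_eq_same]; exact hp s hs
    · rw [Pi.single_eq_of_ne h, coeff_zero]⟩

theorem coeff_one_ge {B : Type} [Ring B] : ∀ j, m ≤ j → (1 : B[X]).coeff j = 0 := by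
  intro j hj
  have := NeZero.pos m
  rw [coeff_one, if_neg (by omega)]

/-- The generator of the induced module. -/
def eps (N : ℕ) : MM k (CH k m N v q) m N := ej v q N 1 le_rfl coeff_one_ge

/-- The conditional expectation. -/
def EE (N : ℕ) : CH k m (N + 1) v q →ₗ[k] CH k m N v q where
  toFun h := ((rho v q N h (eps v q N)).1 N).coeff 0
  map_add' x y := by simp
  map_smul' c x := by simp

theorem EE_apply (N : ℕ) (h) : EE v q N h = ((rho v q N h (eps v q N)).1 N).coeff 0 := rfl

theorem rho_io_eps {N : ℕ} (b : CH k m N v q) :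
    rho v q N (io v q N b) (eps v q N) = rmul v q b (eps v q N) := by
  induction b using ind_gg with
  | halg c =>
    rw [AlgHom.commutes, AlgHom.commutes]
    apply MM_ext
    intro i hi
    rw [rmul_coe, Module.algebraMap_end_apply, Submodule.coe_smul, Pi.smul_apply, Algebra.smul_def]
    exact Algebra.commutes c _
  | hgen l hl =>
    rw [io_gg v q hl]
    apply MM_ext
    intro i hi
    rw [rmul_coe]
    have h0 : ∀ j, j ≠ N → (eps v q N).1 j = 0 := fun j hj => by simp [eps, ej, hj]
    have h1 : (eps v q N).1 N = 1 := by simp [eps, ej]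
    rcases l with _ | l
    · rw [rho_zero]
      rcases i with _ | i
      · rw [opX_zero, h0 0 (by omega)]; simp
      · rw [opX_succ _ hi, h0 0 (by omega)]
        rcases eq_or_ne (i + 1) N with h | h
        · rw [h, h1]; simp
        · rw [h0 _ h]; simp
    · rw [rho_succ v q (by omega)]
      rcases lt_trichotomy i l with h | rfl | h
      · rw [opT_lt _ h, h0 i (by omega)]; simp
      · rw [opT_self, h0 i (by omega), h0 _ (by omega)]; simp
      rcases Nat.lt_or_ge (l + 1) i with h' | h'
      · rw [opT_gt _ h']
        rcases eq_or_ne i N with h | h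
        · rw [h, h1]; simp
        · rw [h0 _ h]; simp
      · obtain rfl : i = l + 1 := by omega
        rw [opT_succ, h0 l (by omega), h0 _ (by omega)]; simp
  | hmul x y hx hy =>
    rw [map_mul, map_mul, Module.End.mul_apply, hy, rho_rmul, hx]
    apply MM_ext
    intro i hi
    simp only [rmul_coe, C_mul, mul_assoc]
  | hadd x y hx hy =>
    rw [map_add, map_add, LinearMap.add_apply, hx, hy]
    apply MM_ext
    intro i hi
    rw [Submodule.coe_add, Pi.add_apply]
    simp only [rmul_coe, C_add, mul_add]

theorem EE_mul_io {N : ℕ} (h : CH k m (N + 1) v q) (b : CH k m N v q) :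
    EE v q N (h * io v q N b) = EE v q N h * b := by
  rw [EE_apply, map_mul, Module.End.mul_apply, rho_io_eps, rho_rmul, rmul_coe, coeff_mul_C]; rfl

theorem top_io {N : ℕ} (b : CH k m N v q) (w : MM k (CH k m N v q) m N) :
    ((rho v q N (io v q N b) w).1 N).coeff 0 = b * (w.1 N).coeff 0 := by
  induction b using ind_gg generalizing w with
  | halg c =>
    rw [AlgHom.commutes, AlgHom.commutes, Module.algebraMap_end_apply, Submodule.coe_smul,
      Pi.smul_apply, coeff_smul, Algebra.smul_def]
  | hgen l hl =>
    rw [io_gg v q hl]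
    obtain ⟨n, rfl⟩ : ∃ n, N = n + 1 := ⟨N - 1, by omega⟩
    rcases l with _ | l
    · rw [rho_zero, opX_succ _ le_rfl, coeff_sub, coeff_smul, mul_coeff_zero X, coeff_X_zero,
        zero_mul, smul_zero, sub_zero, coeff_C_mul]
    · rw [rho_succ v q (by omega), opT_gt _ (by omega), coeff_C_mul]
  | hmul x y hx hy => rw [map_mul, map_mul, Module.End.mul_apply, hx, hy, mul_assoc]
  | hadd x y hx hy =>
    rw [map_add, map_add, LinearMap.add_apply, Submodule.coe_add, Pi.add_apply, coeff_add, hx, hy,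
      add_mul]

theorem EE_io_mul {N : ℕ} (h : CH k m (N + 1) v q) (b : CH k m N v q) :
    EE v q N (io v q N b * h) = b * EE v q N h := by
  rw [EE_apply, map_mul, Module.End.mul_apply, top_io]; rfl

theorem EE_one (N : ℕ) : EE v q N 1 = 1 := by
  rw [EE_apply, map_one, Module.End.one_apply]
  simp [eps, ej]

theorem EE_T (N : ℕ) : EE v q (N + 1) (gg v q (N + 2) (N + 1)) = 0 := by
  rw [EE_apply, rho_succ v q le_rfl, opT_succ]
  simp [eps, ej]

theorem rho_T_ej {N : ℕ} {j : ℕ} (p : (CH k m N v q)[X]) (hj : j + 1 ≤ N)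
    (hp : ∀ j, m ≤ j → p.coeff j = 0) :
    rho v q N (gg v q (N + 1) (j + 1)) (ej v q (j + 1) p hj hp) =
      ej v q j p (by omega) hp := by
  apply MM_ext
  intro i hi
  rw [rho_succ v q hj]
  simp only [ej]
  rcases lt_trichotomy i j with h | rfl | h
  · rw [opT_lt _ h, Pi.single_eq_of_ne (by omega), Pi.single_eq_of_ne (by omega), mul_zero]
  · rw [opT_self]; simp
  rcases Nat.lt_or_ge (j + 1) i with h' | h'
  · rw [opT_gt _ h', Pi.single_eq_of_ne (by omega), Pi.single_eq_of_ne (by omega), mul_zero]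
  · obtain rfl : i = j + 1 := by omega
    rw [opT_succ]; simp

/-- Products `S_{j+1} ⋯ S_{j+d}`. -/
def shd {P : Type} [Ring P] [Algebra k P] (q : k) (G : ℕ → P) (j : ℕ) : ℕ → P
  | 0 => 1
  | d + 1 => shd q G j d * Sop q G (j + d + 1)

theorem shd_zero_left {P : Type} [Ring P] [Algebra k P] (G : ℕ → P) (d : ℕ) :
    shd q G 0 d = sh q G d := by
  induction d with
  | zero => rfl
  | succ d ih => rw [shd, sh, ih, zero_add]

theorem shd_succ_left {P : Type} [Ring P] [Algebra k P] (G : ℕ → P) (j d : ℕ) :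
    shd q G j (d + 1) = Sop q G (j + 1) * shd q G (j + 1) d := by
  induction d with
  | zero => simp [shd]
  | succ d ih =>
    rw [shd, ih, shd, mul_assoc, show j + 1 + d + 1 = j + (d + 1) + 1 by omega]

/-- Murphy elements. -/
def Lw {A : Type} [Ring A] [Algebra k A] (q : k) (g : ℕ → A) : ℕ → A
  | 0 => g 0
  | j + 1 => q⁻¹ • (g (j + 1) * Lw q g j * g (j + 1))

theorem rho_Lw_ej {N j : ℕ} (p : (CH k m N v q)[X]) (hj : j ≤ N)
    (hp : ∀ j, m ≤ j + 1 → p.coeff j = 0) :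
    (∀ i, i < j → (rho v q N (Lw q (gg v q (N + 1)) j)
      (ej v q j p hj fun j hj => hp j (by omega))).1 i = 0) ∧
    (rho v q N (Lw q (gg v q (N + 1)) j)
      (ej v q j p hj fun j hj => hp j (by omega))).1 j = X * p ∧
    ∀ d, j + d + 1 ≤ N → (rho v q N (Lw q (gg v q (N + 1)) j)
      (ej v q j p hj fun j hj => hp j (by omega))).1 (j + d + 1) =
      - ((q - 1) • (X * (shd q (fun l => C (gg v q N l)) j d * p))) := by
  have hm0 := NeZero.pos m
  induction j with
  | zero =>
    have e0 : (ej v q 0 p hj fun j hj => hp j (by omega)).1 0 = p := by simp [ej]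
    have eL : LamP (k := k) (CH k m N v q) m p = 0 := by
      rw [LamP_apply, hp _ (by omega), C_0]
    refine ⟨by omega, ?_, ?_⟩
    · rw [Lw, rho_zero, opX_zero, e0, eL, mul_zero, sub_zero]
    · intro d hd
      rw [Lw, rho_zero, opX_succ _ hd, e0, eL, shd_zero_left, zero_add]
      simp [ej]
  | succ j ih =>
    obtain ⟨h1, h2, h3⟩ := ih (by omega)
    have e : rho v q N (Lw q (gg v q (N + 1)) (j + 1))
      (ej v q (j + 1) p hj fun j hj => hp j (by omega)) = q⁻¹ • rho v q N (gg v q (N + 1) (j + 1))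
        (rho v q N (Lw q (gg v q (N + 1)) j)
          (ej v q j p (by omega) fun j hj => hp j (by omega))) := by
      rw [Lw, map_smul, map_mul, map_mul, LinearMap.smul_apply, Module.End.mul_apply,
        Module.End.mul_apply, rho_T_ej]
    rw [e]
    generalize rho v q N (Lw q (gg v q (N + 1)) j)
          (ej v q j p (by omega) fun j hj => hp j (by omega)) = u at *
    simp only [Submodule.coe_smul, Pi.smul_apply]
    rw [rho_succ v q hj]
    refine ⟨?_, ?_, ?_⟩
    · intro i hi
      rcases Nat.lt_or_ge i j with h | h
      · rw [opT_lt _ h, h1 i h, mul_zero, smul_zero]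
      · obtain rfl : i = j := by omega
        rw [opT_self, h2]
        have := h3 0 (by omega)
        rw [add_zero] at this
        rw [this]
        simp [shd]
    · rw [opT_succ, h2, smul_smul, inv_mul_cancel₀ hq.out, one_smul]
    · intro d hd
      have := h3 (d + 1) (by omega)
      rw [show j + (d + 1) + 1 = j + 1 + d + 1 by omega, shd_succ_left] at this
      rw [opT_gt _ (by omega), this, mul_neg, mul_smul_comm, ← mul_assoc _ X,
        ← X_mul, mul_assoc X, mul_assoc (Sop _ _ _), ← mul_assoc _ (Sop _ _ _),
        mul_Sop (sat_C (sat_gg v q N)) (by omega) (by omega), smul_mul_assoc, one_mul,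
        mul_smul_comm, smul_neg, smul_smul, smul_smul]
      congr 2
      have := hq.out
      field_simp

/-- The last Murphy element of `H_{N+1}`. -/
def LL (N : ℕ) : CH k m (N + 1) v q := Lw q (gg v q (N + 1)) N

theorem rho_LL_ej {N : ℕ} (p : (CH k m N v q)[X]) (hp : ∀ j, m ≤ j + 1 → p.coeff j = 0) :
    ∃ h, rho v q N (LL v q N) (ej v q N p le_rfl fun j hj => hp j (by omega)) =
      ej v q N (X * p) le_rfl h := by
  have h : ∀ j, m ≤ j → (X * p).coeff j = 0 := by
    intro j hj
    have := NeZero.pos m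
    obtain ⟨j, rfl⟩ : ∃ j', j = j' + 1 := ⟨j - 1, by omega⟩
    rw [coeff_X_mul]; exact hp j hj
  refine ⟨h, ?_⟩
  obtain ⟨h1, h2, -⟩ := rho_Lw_ej v q p le_rfl hp
  apply MM_ext
  intro i hi
  rcases hi.lt_or_eq with hi | rfl
  · rw [LL, h1 i hi]; simp only [ej]; rw [Pi.single_eq_of_ne (by omega)]
  · rw [LL, h2]; simp [ej]

theorem rho_LL_pow {N s : ℕ} (hs : s < m) :
    ∃ h, rho v q N (LL v q N ^ s) (eps v q N) = ej v q N (X ^ s) le_rfl h := by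
  induction s with
  | zero => exact ⟨by rw [pow_zero]; exact coeff_one_ge, by simp [eps]⟩
  | succ s ih =>
    obtain ⟨h, e⟩ := ih (by omega)
    obtain ⟨h', e'⟩ := rho_LL_ej v q (N := N) (X ^ s) (fun j hj => by
      rw [coeff_X_pow, if_neg (by omega)])
    refine ⟨by rw [pow_succ']; exact h', ?_⟩
    rw [pow_succ', map_mul, Module.End.mul_apply, e, e']
    apply Subtype.ext
    simp only [ej, pow_succ']

theorem EE_LL_pow {N s : ℕ} (hs : s < m) : EE v q N (LL v q N ^ s) = if s = 0 then 1 else 0 := by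
  obtain ⟨h, e⟩ := rho_LL_pow v q (N := N) hs
  rw [EE_apply, e]
  simp only [ej, Pi.single_eq_same, coeff_X_pow, eq_comm]

/-- Compatibility of the induced modules for consecutive indices. -/
def RR {N : ℕ} (w' : MM k (CH k m (N + 1) v q) m (N + 1)) (w : MM k (CH k m N v q) m N) : Prop :=
  ∀ i, i ≤ N → w'.1 i = (w.1 i).map (io v q N).toRingHom

theorem map_sh (N : ℕ) (j : ℕ) (hj : j < N) :
    (sh q (fun l => C (gg v q N l)) j).map (io v q N).toRingHom =
      sh q (fun l => C (gg v q (N + 1) l)) j := by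
  induction j with
  | zero => simp [sh]
  | succ j ih =>
    have e := io_gg v q hj
    rw [sh, sh, Polynomial.map_mul, ih (by omega), Sop, Sop, Polynomial.map_sub, map_C]
    congr 2
    · congr 1
    · simp only [← C_1, smul_C, map_C]
      congr 1
      simp

theorem map_fP (N : ℕ) (L : List k) : (fP (CH k m N v q) L).map (io v q N).toRingHom =
    fP (CH k m (N + 1) v q) L := by
  induction L with
  | nil => simp [fP]
  | cons a L ih =>
    rw [fP_cons, fP_cons, Polynomial.map_mul, ih]
    simp

theorem map_KP (N : ℕ) (hN : 0 < N) (L : List k) :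
    (KP (gg v q N 0) L).map (io v q N).toRingHom = KP (gg v q (N + 1) 0) L := by
  have e := io_gg v q hN
  induction L with
  | nil => simp [KP]
  | cons a L ih =>
    rw [KP, KP, Polynomial.map_add, Polynomial.map_mul, ih, map_fP, map_C]
    simp [e]

theorem RR_io {N : ℕ} (x : CH k m (N + 1) v q) (w' : MM k (CH k m (N + 1) v q) m (N + 1))
    (w : MM k (CH k m N v q) m N) (h : RR v q w' w) :
    RR v q (rho v q (N + 1) (io v q (N + 1) x) w') (rho v q N x w) := by
  have msmul : ∀ (c : k) (p : (CH k m N v q)[X]), (c • p).map (io v q N).toRingHom =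
      c • p.map (io v q N).toRingHom := by
    intro c p
    ext j
    simp
  induction x using ind_gg generalizing w' w with
  | halg c =>
    intro i hi
    rw [AlgHom.commutes, AlgHom.commutes, AlgHom.commutes, Module.algebraMap_end_apply,
      Module.algebraMap_end_apply, Submodule.coe_smul, Submodule.coe_smul, Pi.smul_apply,
      Pi.smul_apply, h i hi, msmul]
  | hgen l hl =>
    rw [io_gg v q hl]
    intro i hi
    have eg : ∀ l, l < N → (C (gg v q (N + 1) l)) =
        (C (gg v q N l)).map (io v q N).toRingHom := fun l hl => by
      rw [map_C]; congr 1; exact (io_gg v q hl).symm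
    rcases l with _ | l
    · rw [rho_zero, rho_zero]
      have eL : LamP (k := k) (CH k m (N + 1) v q) m (w'.1 0) =
        (LamP (k := k) (CH k m N v q) m (w.1 0)).map (io v q N).toRingHom := by
        rw [h 0 (by omega), LamP_apply, LamP_apply, coeff_map, map_C]
      rcases i with _ | i
      · rw [opX_zero, opX_zero, eL, h 0 hi]
        simp only [Polynomial.map_sub, Polynomial.map_mul, map_X, map_fP]
      · rw [opX_succ _ (by omega), opX_succ _ hi, eL, h _ hi, h 0 (by omega), eg 0 (by omega),
          ← map_sh v q N i (by omega), ← map_KP v q N (by omega)]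
        simp only [Polynomial.map_sub, Polynomial.map_mul, map_X, msmul]
    · rw [rho_succ v q (by omega), rho_succ v q (by omega)]
      rcases lt_trichotomy i l with h' | rfl | h'
      · rw [opT_lt _ h', opT_lt _ h', h i hi, eg l (by omega), Polynomial.map_mul]
      · rw [opT_self, opT_self, h i hi, h _ (by omega), Polynomial.map_add, msmul]
      rcases Nat.lt_or_ge (l + 1) i with h'' | h''
      · rw [opT_gt _ h'', opT_gt _ h'', h i hi, eg _ (by omega), Polynomial.map_mul]
      · obtain rfl : i = l + 1 := by omega
        rw [opT_succ, opT_succ, h l (by omega), msmul]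
  | hmul x y hx hy =>
    rw [map_mul, map_mul, map_mul, Module.End.mul_apply, Module.End.mul_apply]
    exact hx _ _ (hy _ _ h)
  | hadd x y hx hy =>
    intro i hi
    rw [map_add, map_add, map_add, LinearMap.add_apply, LinearMap.add_apply, Submodule.coe_add,
      Submodule.coe_add, Pi.add_apply, Pi.add_apply, hx _ _ h i hi, hy _ _ h i hi,
      Polynomial.map_add]

theorem EE_T_io_T {N : ℕ} (x : CH k m (N + 1) v q) :
    EE v q (N + 1) (gg v q (N + 2) (N + 1) * io v q (N + 1) x * gg v q (N + 2) (N + 1)) =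
      q • io v q N (EE v q N x) := by
  have hR : RR v q (ej v q N 1 (Nat.le_succ N) coeff_one_ge) (eps v q N) := by
    intro i hi
    rcases eq_or_ne i N with rfl | h
    · simp [ej, eps]
    · simp [ej, eps, h]
  have := RR_io v q x _ _ hR N le_rfl
  rw [EE_apply, map_mul, map_mul, Module.End.mul_apply, Module.End.mul_apply, eps,
    rho_T_ej v q 1 le_rfl coeff_one_ge, rho_succ v q le_rfl, opT_succ, this, coeff_smul, coeff_map]
  rfl

end Expectation

section Murphy

variable {k : Type} [Field k] {m : ℕ}

section General

variable {A : Type} [Ring A] [Algebra k A] {v : Fin m → k} {q : k} {N : ℕ} {g : ℕ → A}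

theorem Lw_comm_gt (hg : Sat v q N g) {j l : ℕ} (h : j + 2 ≤ l) (hl : l < N) :
    Commute (g l) (Lw q g j) := by
  induction j with
  | zero => exact (hg.comm 0 l h hl).symm
  | succ j ih =>
    have c : Commute (g l) (g (j + 1)) := (hg.comm _ l h hl).symm
    exact ((c.mul_right (ih (by omega))).mul_right c).smul_right _

theorem Lw_comm_lt (hg : Sat v q N g) {j l : ℕ} (h : l < j) (hj : j < N) :
    Commute (g l) (Lw q g j) := by
  induction j with
  | zero => omega
  | succ j ih =>
    rcases Nat.lt_or_ge l j with h' | h'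
    · have c : Commute (g l) (g (j + 1)) := hg.comm l (j + 1) (by omega) hj
      exact ((c.mul_right (ih h' (by omega))).mul_right c).smul_right _
    · obtain rfl : l = j := by omega
      refine Commute.smul_right ?_ _
      rcases l with _ | l
      · have := hg.braid0 (by omega)
        show _ = _
        simp only [Lw, ← mul_assoc] at this ⊢
        exact this
      · have c : Commute (g (l + 1 + 1)) (Lw q g l) := Lw_comm_gt hg le_rfl hj
        have b := hg.braid (l + 1) (by omega) hj
        rw [Lw, mul_smul_comm, smul_mul_assoc]
        refine Commute.smul_right ?_ _
        show _ = _
        calc _ = (g (l + 1) * g (l + 1 + 1) * g (l + 1)) * Lw q g l * g (l + 1) * g (l + 1 + 1) := by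
              simp only [mul_assoc]
          _ = g (l + 1 + 1) * g (l + 1) * (g (l + 1 + 1) * Lw q g l) * g (l + 1) * g (l + 1 + 1) := by
              rw [← b]; simp only [mul_assoc]
          _ = g (l + 1 + 1) * g (l + 1) * Lw q g l * (g (l + 1 + 1) * g (l + 1) * g (l + 1 + 1)) := by
              rw [c.eq]; simp only [mul_assoc]
          _ = _ := by rw [b]; simp only [mul_assoc]

theorem isUnit_gen (hq : q ≠ 0) (hg : Sat v q N g) {l : ℕ} (h1 : 1 ≤ l) (hl : l < N) :
    IsUnit (g l) := by
  refine ⟨⟨g l, q⁻¹ • Sop q g l, ?_, ?_⟩, rfl⟩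
  · rw [mul_smul_comm, mul_Sop hg h1 hl, smul_smul, inv_mul_cancel₀ hq, one_smul]
  · rw [smul_mul_assoc, Sop_mul hg h1 hl, smul_smul, inv_mul_cancel₀ hq, one_smul]

theorem prod_eq (y : A) (L : List k) (hL : ∀ a ∈ L, a ≠ 0) : ∃ (P : A) (c : k), c ≠ 0 ∧
    Commute y P ∧ (L.map fun a => y - algebraMap k A a).prod = y * P + algebraMap k A c := by
  induction L with
  | nil => exact ⟨0, 1, one_ne_zero, Commute.zero_right _, by simp⟩
  | cons a L ih =>
    obtain ⟨P, c, hc, hP, e⟩ := ih fun b hb => hL b (by simp [hb])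
    refine ⟨y * P + algebraMap k A c - algebraMap k A a * P, - (a * c),
      neg_ne_zero.mpr (mul_ne_zero (hL a (by simp)) hc), ?_, ?_⟩
    · exact (((Commute.refl y).mul_right hP).add_right (Algebra.commutes c y).symm).sub_right
        (Commute.mul_right (Algebra.commutes a y).symm hP)
    · rw [List.map_cons, List.prod_cons, e, sub_mul, mul_add (algebraMap k A a), mul_sub,
        map_neg, map_mul, ← mul_assoc y (algebraMap k A a), ← Algebra.commutes a y, mul_assoc]
      abel

theorem isUnit_zero (hv : ∀ j, v j ≠ 0) (hg : Sat v q N g) (hN : 0 < N) : IsUnit (g 0) := by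
  obtain ⟨P, c, hc, hP, e⟩ := prod_eq (g 0) (List.ofFn v) (by
    intro a ha
    rw [List.mem_ofFn] at ha
    obtain ⟨j, rfl⟩ := ha
    exact hv j)
  rw [hg.cyclo hN] at e
  have e1 : g 0 * P = - (c • (1 : A)) := by
    rw [← Algebra.algebraMap_eq_smul_one, eq_neg_iff_add_eq_zero]; exact e.symm
  have e2 : P * g 0 = - (c • (1 : A)) := by rw [← hP.eq, e1]
  refine ⟨⟨g 0, - (c⁻¹ • P), ?_, ?_⟩, rfl⟩
  · rw [mul_neg, mul_smul_comm, e1, smul_neg, neg_neg, smul_smul, inv_mul_cancel₀ hc, one_smul]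
  · rw [neg_mul, smul_mul_assoc, e2, smul_neg, neg_neg, smul_smul, inv_mul_cancel₀ hc, one_smul]

theorem isUnit_Lw (hq : q ≠ 0) (hv : ∀ j, v j ≠ 0) (hg : Sat v q N g) {j : ℕ} (hj : j < N) :
    IsUnit (Lw q g j) := by
  induction j with
  | zero =>
    show IsUnit (g 0)
    exact isUnit_zero hv hg hj
  | succ j ih =>
    have h := ((isUnit_gen hq hg (by omega) hj).mul (ih (by omega))).mul
      (isUnit_gen hq hg (show 1 ≤ j + 1 by omega) hj)
    have h2 : IsUnit (algebraMap k A q⁻¹) := (IsUnit.mk0 _ (inv_ne_zero hq)).map (algebraMap k A)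
    rw [Lw, Algebra.smul_def]
    exact h2.mul h

/-- Span of the first powers. -/
def powS (y : A) (r : ℕ) : Submodule k A := Submodule.span k {x | ∃ s, s < r ∧ x = y ^ s}

theorem powS_mono (y : A) {r r' : ℕ} (h : r ≤ r') : powS (k := k) y r ≤ powS y r' := by
  apply Submodule.span_mono
  rintro x ⟨s, hs, rfl⟩
  exact ⟨s, by omega, rfl⟩

theorem powS_mul (y : A) {r : ℕ} {x : A} (hx : x ∈ powS (k := k) y r) :
    y * x ∈ powS (k := k) y (r + 1) := by
  induction hx using Submodule.span_induction with
  | mem x hx =>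
    obtain ⟨s, hs, rfl⟩ := hx
    exact Submodule.subset_span ⟨s + 1, by omega, (pow_succ' y s).symm⟩
  | zero => rw [mul_zero]; exact zero_mem _
  | add x y _ _ hx hy => rw [mul_add]; exact add_mem hx hy
  | smul c x _ hx => rw [mul_smul_comm]; exact Submodule.smul_mem _ _ hx

theorem powS_prod (y : A) (L : List k) :
    y ^ L.length - (L.map fun a => y - algebraMap k A a).prod ∈ powS (k := k) y L.length := by
  induction L with
  | nil => simp
  | cons a L ih =>
    set P := (L.map fun a => y - algebraMap k A a).prod with hP
    have e : y ^ (a :: L).length - ((a :: L).map fun a => y - algebraMap k A a).prod =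
        y * (y ^ L.length - P) + a • (y ^ L.length - (y ^ L.length - P)) := by
      rw [List.map_cons, List.prod_cons, ← hP, List.length_cons, pow_succ', Algebra.smul_def,
        sub_mul, mul_sub, sub_sub_cancel]
      abel
    rw [e]
    refine add_mem (powS_mul y ih) (Submodule.smul_mem _ _ (sub_mem ?_ ?_))
    · exact Submodule.subset_span ⟨_, by simp, rfl⟩
    · exact powS_mono y (by simp) ih

end General

variable (v : Fin m → k) (q : k) [hq : Fact (q ≠ 0)] [hm : NeZero m]

theorem io_Lw {N j : ℕ} (hj : j < N) :
    io v q N (Lw q (gg v q N) j) = Lw q (gg v q (N + 1)) j := by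
  induction j with
  | zero => exact io_gg v q hj
  | succ j ih => rw [Lw, map_smul, map_mul, map_mul, ih (by omega), io_gg v q hj, Lw]

/-- The last generator of `H_{N+2}`. -/
def TT (N : ℕ) : CH k m (N + 2) v q := gg v q (N + 2) (N + 1)

theorem LL_succ (N : ℕ) :
    LL v q (N + 1) = q⁻¹ • (TT v q N * io v q (N + 1) (LL v q N) * TT v q N) := by
  rw [LL, LL, Lw, io_Lw v q (by omega)]; rfl

theorem commute_io {N : ℕ} (y : CH k m (N + 1) v q)
    (h : ∀ l, l < N → Commute (gg v q (N + 1) l) y) (x : CH k m N v q) :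
    Commute (io v q N x) y := by
  induction x using ind_gg with
  | halg c => rw [AlgHom.commutes]; exact Algebra.commutes c y
  | hgen l hl => rw [io_gg v q hl]; exact h l hl
  | hmul a b ha hb => rw [map_mul]; exact ha.mul_left hb
  | hadd a b ha hb => rw [map_add]; exact ha.add_left hb

theorem LL_comm {N : ℕ} (x : CH k m N v q) : Commute (io v q N x) (LL v q N) :=
  commute_io v q _ (fun l hl => Lw_comm_lt (sat_gg v q (N + 1)) hl (by omega)) x

theorem T_comm {N : ℕ} (x : CH k m N v q) :
    Commute (io v q (N + 1) (io v q N x)) (TT v q N) := by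
  induction x using ind_gg with
  | halg c => rw [AlgHom.commutes, AlgHom.commutes]; exact Algebra.commutes c _
  | hgen l hl =>
    rw [io_gg v q hl, io_gg v q (by omega)]
    exact (sat_gg v q (N + 2)).comm l (N + 1) (by omega) (by omega)
  | hmul a b ha hb => rw [map_mul, map_mul]; exact ha.mul_left hb
  | hadd a b ha hb => rw [map_add, map_add]; exact ha.add_left hb

theorem TT_quad (N : ℕ) : TT v q N * TT v q N = (q - 1) • TT v q N + q • 1 :=
  (sat_gg v q (N + 2)).quad (N + 1) (by omega) (by omega)

theorem TT_mul_LL (N : ℕ) : TT v q N * LL v q (N + 1) =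
    io v q (N + 1) (LL v q N) * TT v q N + (q - 1) • LL v q (N + 1) := by
  rw [LL_succ, mul_smul_comm, ← mul_assoc, ← mul_assoc, TT_quad, add_mul, add_mul, smul_add]
  simp only [smul_mul_assoc, one_mul, smul_smul]
  rw [inv_mul_cancel₀ hq.out, one_smul, mul_comm q⁻¹ (q - 1)]
  exact add_comm _ _

theorem LL_mul_TT (N : ℕ) : LL v q (N + 1) * TT v q N =
    TT v q N * io v q (N + 1) (LL v q N) + (q - 1) • LL v q (N + 1) := by
  rw [LL_succ, smul_mul_assoc, mul_assoc _ _ (TT v q N), TT_quad, mul_add, smul_add]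
  simp only [mul_smul_comm, mul_one, smul_smul]
  rw [inv_mul_cancel₀ hq.out, one_smul, mul_comm q⁻¹ (q - 1)]
  exact add_comm _ _

theorem EE_pow_T (N s : ℕ) (hs : s < m) :
    EE v q (N + 1) (LL v q (N + 1) ^ s * TT v q N) = 0 := by
  induction s with
  | zero => rw [pow_zero, one_mul]; exact EE_T v q N
  | succ s ih =>
    rw [pow_succ, mul_assoc, LL_mul_TT, mul_add, mul_smul_comm, ← pow_succ, ← mul_assoc, map_add,
      map_smul, EE_mul_io, ih (by omega), EE_LL_pow v q hs]
    simp

theorem EE_T_pow (N s : ℕ) (hs : s < m) :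
    EE v q (N + 1) (TT v q N * LL v q (N + 1) ^ s) = 0 := by
  induction s with
  | zero => rw [pow_zero, mul_one]; exact EE_T v q N
  | succ s ih =>
    rw [pow_succ', ← mul_assoc, TT_mul_LL, add_mul, smul_mul_assoc, ← pow_succ', mul_assoc, map_add,
      map_smul, EE_io_mul, ih (by omega), EE_LL_pow v q hs]
    simp

/-- Subspaces of `H_{N+1}`: the span of the `L^s g` with `s < r` and, if `N ≥ 1`, of the
`g T g'`. -/
def DD (N r : ℕ) : Submodule k (CH k m (N + 1) v q) :=
  Submodule.span k ({x | ∃ s g, s < r ∧ x = LL v q N ^ s * io v q N g} ∪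
    {x | 1 ≤ N ∧ ∃ g g', x = io v q N g * gg v q (N + 1) N * io v q N g'})

theorem DD_pow {N r s : ℕ} (g : CH k m N v q) (h : s < r) :
    LL v q N ^ s * io v q N g ∈ DD v q N r :=
  Submodule.subset_span (Or.inl ⟨s, g, h, rfl⟩)

theorem DD_T {N r : ℕ} (g g' : CH k m (N + 1) v q) :
    io v q _ g * TT v q N * io v q _ g' ∈ DD v q (N + 1) r :=
  Submodule.subset_span (Or.inr ⟨by omega, g, g', rfl⟩)

theorem DD_mono {N r r' : ℕ} (h : r ≤ r') : DD v q N r ≤ DD v q N r' := by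
  apply Submodule.span_mono
  apply Set.union_subset_union_left
  rintro x ⟨s, g, hs, rfl⟩
  exact ⟨s, g, by omega, rfl⟩

theorem DD_left {N r : ℕ} (b : CH k m N v q) {x} (hx : x ∈ DD v q N r) :
    io v q N b * x ∈ DD v q N r := by
  induction hx using Submodule.span_induction with
  | mem x hx =>
    rcases hx with ⟨s, g, hs, rfl⟩ | ⟨hN, g, g', rfl⟩
    · rw [← mul_assoc, ((LL_comm v q b).pow_right s).eq, mul_assoc, ← map_mul]
      exact DD_pow v q _ hs
    · rw [← mul_assoc, ← mul_assoc, ← map_mul]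
      exact Submodule.subset_span (Or.inr ⟨hN, _, _, rfl⟩)
  | zero => rw [mul_zero]; exact zero_mem _
  | add x y _ _ hx hy => rw [mul_add]; exact add_mem hx hy
  | smul c x _ hx => rw [mul_smul_comm]; exact Submodule.smul_mem _ _ hx

theorem DD_right {N r : ℕ} (b : CH k m N v q) {x} (hx : x ∈ DD v q N r) :
    x * io v q N b ∈ DD v q N r := by
  induction hx using Submodule.span_induction with
  | mem x hx =>
    rcases hx with ⟨s, g, hs, rfl⟩ | ⟨hN, g, g', rfl⟩
    · rw [mul_assoc, ← map_mul]
      exact DD_pow v q _ hs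
    · rw [mul_assoc, ← map_mul]
      exact Submodule.subset_span (Or.inr ⟨hN, _, _, rfl⟩)
  | zero => rw [zero_mul]; exact zero_mem _
  | add x y _ _ hx hy => rw [add_mul]; exact add_mem hx hy
  | smul c x _ hx => rw [smul_mul_assoc]; exact Submodule.smul_mem _ _ hx

theorem DD_mul_LL {N r : ℕ} {x} (hx : x ∈ DD v q (N + 1) r) (hr : 1 ≤ r) :
    x * LL v q (N + 1) ∈ DD v q (N + 1) (r + 1) := by
  induction hx using Submodule.span_induction with
  | mem x hx =>
    rcases hx with ⟨s, g, hs, rfl⟩ | ⟨hN, g, g', rfl⟩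
    · rw [mul_assoc, (LL_comm v q g).eq, ← mul_assoc, ← pow_succ]
      exact DD_pow v q _ (by omega)
    · rw [mul_assoc, (LL_comm v q g').eq, ← mul_assoc]
      apply DD_right
      rw [mul_assoc]
      apply DD_left
      show TT v q N * _ ∈ _
      rw [TT_mul_LL]
      apply add_mem
      · have := DD_T v q (r := r + 1) (LL v q N) 1
        rwa [map_one, mul_one] at this
      · apply Submodule.smul_mem
        have := DD_pow v q (N := N + 1) (s := 1) (r := r + 1) 1 (by omega)
        rwa [map_one, mul_one, pow_one] at this
  | zero => rw [zero_mul]; exact zero_mem _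
  | add x y _ _ hx hy => rw [add_mul]; exact add_mem hx hy
  | smul c x _ hx => rw [smul_mul_assoc]; exact Submodule.smul_mem _ _ hx

theorem TT_mem (N r : ℕ) : TT v q N ∈ DD v q (N + 1) r := by
  have := DD_T v q (r := r) (N := N) 1 1
  rwa [map_one, mul_one, one_mul] at this

theorem one_mem_DD (N r : ℕ) (hr : 0 < r) : 1 ∈ DD v q N r := by
  have := DD_pow v q (N := N) (s := 0) (r := r) 1 hr
  rwa [map_one, mul_one, pow_zero] at this

theorem DD_T_LL (N s : ℕ) : TT v q N * LL v q (N + 1) ^ s ∈ DD v q (N + 1) (s + 1) := by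
  induction s with
  | zero => rw [pow_zero, mul_one]; exact TT_mem v q N _
  | succ s ih =>
    rw [pow_succ, ← mul_assoc]
    exact DD_mul_LL v q ih (by omega)

theorem DD_TLT (N s : ℕ) :
    TT v q N * io v q (N + 1) (LL v q N ^ s) * TT v q N ∈ DD v q (N + 1) (s + 1) := by
  induction s with
  | zero =>
    rw [pow_zero, map_one, mul_one, TT_quad]
    exact add_mem (Submodule.smul_mem _ _ (TT_mem v q N _))
      (Submodule.smul_mem _ _ (one_mem_DD v q _ _ (by omega)))
  | succ s ih =>
    have e : io v q (N + 1) (LL v q N) * TT v q N =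
        TT v q N * LL v q (N + 1) - (q - 1) • LL v q (N + 1) := by
      rw [TT_mul_LL]; abel
    rw [pow_succ, map_mul, mul_assoc, mul_assoc _ _ (TT v q N), e, mul_sub, mul_sub]
    apply sub_mem
    · rw [← mul_assoc, ← mul_assoc]
      exact DD_mul_LL v q ih (by omega)
    · rw [mul_smul_comm, mul_smul_comm, (LL_comm v q _).eq, ← mul_assoc]
      apply Submodule.smul_mem
      apply DD_right
      have := DD_T_LL v q N 1
      rw [pow_one] at this
      exact DD_mono v q (by omega) this

end Murphy

section Final

variable {k : Type} [Field k] {m : ℕ}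

variable (v : Fin m → k) (q : k) [hq : Fact (q ≠ 0)] [hm : NeZero m]

theorem DD_zero_top (x) : x ∈ DD v q 0 m := by
  have hpos : 0 < m := Nat.pos_of_ne_zero hm.out
  have hpow : LL v q 0 ^ m ∈ DD v q 0 m := by
    have h := powS_prod (LL v q 0) (List.ofFn v)
    have c := (sat_gg v q 1).cyclo (by omega)
    have e : gg v q 1 0 = LL v q 0 := rfl
    rw [e] at c
    rw [c, sub_zero, List.length_ofFn] at h
    refine (Submodule.span_le.mpr ?_) h
    rintro x ⟨s, hs, rfl⟩
    have := DD_pow v q (N := 0) (r := m) 1 hs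
    rwa [map_one, mul_one] at this
  refine ind_left (DD v q 0 m) (one_mem_DD v q 0 m hpos) ?_ x
  intro l hl x hx
  obtain rfl : l = 0 := by omega
  show LL v q 0 * x ∈ _
  induction hx using Submodule.span_induction with
  | mem x hx =>
    rcases hx with ⟨s, g, hs, rfl⟩ | ⟨hN, _⟩
    · rw [← mul_assoc, ← pow_succ']
      rcases Nat.lt_or_ge (s + 1) m with h | h
      · exact DD_pow v q g h
      · obtain e : s + 1 = m := by omega
        rw [e]
        exact DD_right v q g hpow
    · omega
  | zero => rw [mul_zero]; exact zero_mem _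
  | add x y _ _ hx hy => rw [mul_add]; exact add_mem hx hy
  | smul c x _ hx => rw [mul_smul_comm]; exact Submodule.smul_mem _ _ hx

theorem DD_T_io_T {N : ℕ} {g} (hg : g ∈ DD v q N m) :
    TT v q N * io v q (N + 1) g * TT v q N ∈ DD v q (N + 1) m := by
  induction hg using Submodule.span_induction with
  | mem x hx =>
    rcases hx with ⟨s, h, hs, rfl⟩ | ⟨hN, h, h', rfl⟩
    · rw [map_mul, mul_assoc, mul_assoc, (T_comm v q h).eq, ← mul_assoc, ← mul_assoc]
      exact DD_right v q _ (DD_mono v q (by omega) (DD_TLT v q N s))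
    · have b := (sat_gg v q (N + 2)).braid N hN (by omega)
      rw [← io_gg v q (show N < N + 1 by omega)] at b
      have b' : TT v q N * io v q (N + 1) (gg v q (N + 1) N) * TT v q N =
        io v q (N + 1) (gg v q (N + 1) N) * TT v q N * io v q (N + 1) (gg v q (N + 1) N) := b
      have e : TT v q N * io v q (N + 1) (io v q N h * gg v q (N + 1) N * io v q N h') * TT v q N
          = io v q (N + 1) (io v q N h) * (TT v q N * io v q (N + 1) (gg v q (N + 1) N) * TT v q N)
            * io v q (N + 1) (io v q N h') := by
        rw [map_mul, map_mul, mul_assoc, mul_assoc _ _ (TT v q N), (T_comm v q h').eq]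
        simp only [← mul_assoc]
        rw [(T_comm v q h).eq]
      rw [e, b']
      apply DD_right
      apply DD_left
      exact DD_T v q _ _
  | zero => rw [map_zero, mul_zero, zero_mul]; exact zero_mem _
  | add x y _ _ hx hy => rw [map_add, mul_add, add_mul]; exact add_mem hx hy
  | smul c x _ hx =>
    rw [map_smul, mul_smul_comm, smul_mul_assoc]; exact Submodule.smul_mem _ _ hx

theorem DD_top (N : ℕ) : ∀ x, x ∈ DD v q N m := by
  have hpos : 0 < m := Nat.pos_of_ne_zero hm.out
  induction N with
  | zero => exact DD_zero_top v q
  | succ N ih =>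
    refine ind_left _ (one_mem_DD v q _ m hpos) ?_
    intro l hl x hx
    rcases Nat.lt_or_ge l (N + 1) with h | h
    · rw [← io_gg v q h]
      exact DD_left v q _ hx
    · obtain rfl : l = N + 1 := by omega
      show TT v q N * x ∈ _
      induction hx using Submodule.span_induction with
      | mem x hx =>
        rcases hx with ⟨s, g, hs, rfl⟩ | ⟨hN, g, g', rfl⟩
        · rw [← mul_assoc]
          exact DD_right v q _ (DD_mono v q (by omega) (DD_T_LL v q N s))
        · rw [← mul_assoc, ← mul_assoc]
          exact DD_right v q _ (DD_T_io_T v q (ih g))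
      | zero => rw [mul_zero]; exact zero_mem _
      | add x y _ _ hx hy => rw [mul_add]; exact add_mem hx hy
      | smul c x _ hx => rw [mul_smul_comm]; exact Submodule.smul_mem _ _ hx

theorem sat_zero : Sat v q 0 (fun _ => (0 : k)) where
  cyclo h := by omega
  quad _ _ h := by omega
  braid0 h := by omega
  comm _ _ _ h := by omega
  braid _ _ h := by omega

/-- The trace form. -/
def tau : ∀ N : ℕ, CH k m N v q →ₗ[k] k
  | 0 => (liftH (sat_zero v q)).toLinearMap
  | N + 1 => (tau N).comp (EE v q N)

theorem tau_succ (N : ℕ) (x) : tau v q (N + 1) x = tau v q N (EE v q N x) := rfl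

theorem CH_zero (x : CH k m 0 v q) : ∃ c : k, x = algebraMap k _ c := by
  induction x using ind_gg with
  | halg c => exact ⟨c, rfl⟩
  | hgen l hl => omega
  | hmul a b ha hb =>
    obtain ⟨c, rfl⟩ := ha
    obtain ⟨d, rfl⟩ := hb
    exact ⟨c * d, (map_mul _ _ _).symm⟩
  | hadd a b ha hb =>
    obtain ⟨c, rfl⟩ := ha
    obtain ⟨d, rfl⟩ := hb
    exact ⟨c + d, (map_add _ _ _).symm⟩

theorem tau_T {N : ℕ} (x) :
    tau v q (N + 2) (x * TT v q N) = tau v q (N + 2) (TT v q N * x) := by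
  have hx := DD_top v q (N + 1) x
  induction hx using Submodule.span_induction with
  | mem x hx =>
    rcases hx with ⟨s, g, hs, rfl⟩ | ⟨hN, g, g', rfl⟩
    · rw [tau_succ, tau_succ _ _ _ (TT v q N * _), ← mul_assoc, EE_mul_io, EE_T_pow v q N s hs,
        ← ((LL_comm v q g).pow_right s).eq, mul_assoc, EE_io_mul, EE_pow_T v q N s hs]
      simp
    · have e1 : io v q (N + 1) g * gg v q (N + 1 + 1) (N + 1) * io v q (N + 1) g' * TT v q N =
          io v q (N + 1) g * (gg v q (N + 2) (N + 1) * io v q (N + 1) g' *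
            gg v q (N + 2) (N + 1)) := by
        simp only [mul_assoc]; rfl
      have e2 : TT v q N * (io v q (N + 1) g * gg v q (N + 1 + 1) (N + 1) * io v q (N + 1) g') =
          (gg v q (N + 2) (N + 1) * io v q (N + 1) g *
            gg v q (N + 2) (N + 1)) * io v q (N + 1) g' := by
        simp only [mul_assoc]; rfl
      rw [e1, e2, tau_succ, tau_succ _ _ _ (_ * io v q (N + 1) g'), EE_io_mul, EE_mul_io,
        EE_T_io_T, EE_T_io_T, mul_smul_comm, smul_mul_assoc, map_smul, map_smul, tau_succ, tau_succ,
        EE_mul_io, EE_io_mul]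
  | zero => simp
  | add x y _ _ hx hy => rw [add_mul, mul_add, map_add, map_add, hx, hy]
  | smul c x _ hx => rw [smul_mul_assoc, mul_smul_comm, map_smul, map_smul, hx]

theorem tau_symm (N : ℕ) : ∀ x y, tau v q N (x * y) = tau v q N (y * x) := by
  induction N with
  | zero =>
    intro x y
    obtain ⟨c, rfl⟩ := CH_zero v q y
    rw [Algebra.commutes c x]
  | succ N ih =>
    intro x y
    induction y using ind_gg generalizing x with
    | halg c => rw [Algebra.commutes c x]
    | hgen l hl =>
      rcases Nat.lt_or_ge l N with h | h
      · rw [← io_gg v q h, tau_succ, tau_succ, EE_mul_io, EE_io_mul, ih]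
      · obtain rfl : l = N := by omega
        rcases l with _ | N
        · congr 1
          induction x using ind_gg with
          | halg c => exact Algebra.commutes c _
          | hgen l hl =>
            obtain rfl : l = 0 := by omega
            rfl
          | hmul a b ha hb => rw [mul_assoc, hb, ← mul_assoc, ha, mul_assoc]
          | hadd a b ha hb => rw [add_mul, mul_add, ha, hb]
        · exact tau_T v q x
    | hmul a b ha hb => rw [← mul_assoc, hb, ← mul_assoc, ha, ← mul_assoc]
    | hadd a b ha hb => rw [add_mul, mul_add, map_add, map_add, ha, hb]

/-- The rank one operators. -/
def rkOne {N : ℕ} (a b : CH k m (N + 1) v q) : Module.End k (CH k m (N + 1) v q) :=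
  LinearMap.mulRight k b ∘ₗ (io v q N).toLinearMap ∘ₗ EE v q N ∘ₗ LinearMap.mulRight k a

theorem rkOne_apply {N : ℕ} (a b x : CH k m (N + 1) v q) :
    rkOne v q a b x = io v q N (EE v q N (x * a)) * b := rfl

/-- The span of the rank one operators. -/
def IF (N : ℕ) : Submodule k (Module.End k (CH k m (N + 1) v q)) :=
  Submodule.span k {φ | ∃ a b, φ = rkOne v q a b}

theorem rkOne_mem {N : ℕ} (a b : CH k m (N + 1) v q) : rkOne v q a b ∈ IF v q N :=
  Submodule.subset_span ⟨a, b, rfl⟩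

theorem rkOne_comp {N : ℕ} (a b c d : CH k m (N + 1) v q) :
    rkOne v q a b * rkOne v q c d = rkOne v q (c * io v q N (EE v q N (d * a))) b := by
  ext x
  rw [Module.End.mul_apply, rkOne_apply, rkOne_apply, rkOne_apply, mul_assoc, EE_io_mul, ← mul_assoc,
    EE_mul_io]

theorem IF_mul {N : ℕ} {φ ψ} (hφ : φ ∈ IF v q N) (hψ : ψ ∈ IF v q N) : φ * ψ ∈ IF v q N := by
  have h := Submodule.mul_mem_mul hφ hψ
  rw [IF, Submodule.span_mul_span] at h
  refine (Submodule.span_le.mpr ?_) h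
  rintro _ ⟨_, ⟨a, b, rfl⟩, _, ⟨c, d, rfl⟩, rfl⟩
  show rkOne v q a b * rkOne v q c d ∈ _
  rw [rkOne_comp]
  exact rkOne_mem v q _ _

theorem IF_zero {N : ℕ} {φ} (hφ : φ ∈ IF v q N) (x) (hx : ∀ a, EE v q N (x * a) = 0) :
    φ x = 0 := by
  induction hφ using Submodule.span_induction with
  | mem φ h =>
    obtain ⟨a, b, rfl⟩ := h
    rw [rkOne_apply, hx, map_zero, zero_mul]
  | zero => rfl
  | add x y _ _ hx hy => rw [LinearMap.add_apply, hx, hy, add_zero]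
  | smul c x _ hx => rw [LinearMap.smul_apply, hx, smul_zero]

theorem IF_lift {N : ℕ} {φ} (hφ : φ ∈ IF v q N) : ∃ Q ∈ IF v q (N + 1),
    (∀ g g', Q (io v q _ g * TT v q N * io v q _ g') = io v q _ g * TT v q N * io v q _ (φ g')) ∧
    ∀ s g, s < m → Q (LL v q (N + 1) ^ s * io v q _ g) = 0 := by
  induction hφ using Submodule.span_induction with
  | mem φ h =>
    obtain ⟨d, c, rfl⟩ := h
    refine ⟨q⁻¹ • rkOne v q (io v q _ d * TT v q N) (TT v q N * io v q _ c),
      Submodule.smul_mem _ _ (rkOne_mem v q _ _), ?_, ?_⟩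
    · intro g g'
      have e : io v q (N + 1) g * TT v q N * io v q (N + 1) g' * (io v q (N + 1) d * TT v q N) =
          io v q (N + 1) g * (gg v q (N + 2) (N + 1) * io v q (N + 1) (g' * d) *
            gg v q (N + 2) (N + 1)) := by
        rw [map_mul]; simp only [mul_assoc]; rfl
      rw [LinearMap.smul_apply, rkOne_apply, rkOne_apply, e, EE_io_mul, EE_T_io_T, mul_smul_comm,
        map_smul, smul_mul_assoc, smul_smul, inv_mul_cancel₀ hq.out, one_smul,
        map_mul (io v q (N + 1)), map_mul (io v q (N + 1)), mul_assoc,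
        ← mul_assoc _ (TT v q N) (io v q (N + 1) c), (T_comm v q _).eq]
      simp only [mul_assoc]
    · intro s g hs
      rw [LinearMap.smul_apply, rkOne_apply, mul_assoc, ← mul_assoc (io v q (N + 1) g), ← map_mul,
        ← mul_assoc (LL v q (N + 1) ^ s), ← ((LL_comm v q (g * d)).pow_right s).eq, mul_assoc,
        EE_io_mul,
        EE_pow_T v q N s hs]
      simp
  | zero => exact ⟨0, zero_mem _, by simp, by simp⟩
  | add x y _ _ hx hy =>
    obtain ⟨Q, h1, h2, h3⟩ := hx
    obtain ⟨R, r1, r2, r3⟩ := hy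
    refine ⟨Q + R, add_mem h1 r1, ?_, ?_⟩
    · intro g g'
      rw [LinearMap.add_apply, h2, r2, LinearMap.add_apply, map_add, mul_add]
    · intro s g hs
      rw [LinearMap.add_apply, h3 s g hs, r3 s g hs, add_zero]
  | smul c x _ hx =>
    obtain ⟨Q, h1, h2, h3⟩ := hx
    refine ⟨c • Q, Submodule.smul_mem _ _ h1, ?_, ?_⟩
    · intro g g'
      rw [LinearMap.smul_apply, h2, LinearMap.smul_apply, map_smul, mul_smul_comm]
    · intro s g hs
      rw [LinearMap.smul_apply, h3 s g hs, smul_zero]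

theorem IF_pow (hv : ∀ j, v j ≠ 0) (N t : ℕ) : ∀ r, r + t = m → ∃ φ ∈ IF v q N,
    ∀ j g, r ≤ j → j < m → φ (LL v q N ^ j * io v q N g) = LL v q N ^ j * io v q N g := by
  obtain ⟨u, hu⟩ : IsUnit (LL v q N) := isUnit_Lw hq.out hv (sat_gg v q (N + 1)) (by omega)
  induction t with
  | zero => intro r hr; exact ⟨0, zero_mem _, fun j g h1 h2 => by omega⟩
  | succ t ih =>
    intro r hr
    obtain ⟨φ, h1, h2⟩ := ih (r + 1) (by omega)
    set Q := rkOne v q (N := N) ((u⁻¹ ^ r : (CH k m (N + 1) v q)ˣ) : CH k m (N + 1) v q)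
      (LL v q N ^ r) with hQ
    have Q1 : ∀ j g, r ≤ j → j < m → Q (LL v q N ^ j * io v q N g) =
        if j = r then LL v q N ^ j * io v q N g else 0 := by
      intro j g hj hj'
      obtain ⟨d, rfl⟩ := Nat.exists_eq_add_of_le hj
      have e : LL v q N ^ (r + d) * ((u⁻¹ ^ r : (CH k m (N + 1) v q)ˣ) : CH k m (N + 1) v q) =
          LL v q N ^ d := by
        rw [← hu, ← Units.val_pow_eq_pow_val, ← Units.val_pow_eq_pow_val, ← Units.val_mul]
        congr 1
        rw [add_comm r d, pow_add, mul_assoc, inv_pow, mul_inv_cancel, mul_one]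
      rw [hQ, rkOne_apply, ← ((LL_comm v q g).pow_right _).eq, mul_assoc, e, EE_io_mul,
        EE_LL_pow v q (by omega)]
      by_cases hd : d = 0
      · subst hd; simp
      · rw [if_neg hd, if_neg (by omega)]; simp
    refine ⟨Q + φ - φ * Q, sub_mem (add_mem (rkOne_mem v q _ _) h1)
      (IF_mul v q h1 (rkOne_mem v q _ _)), ?_⟩
    intro j g hj hj'
    rw [LinearMap.sub_apply, LinearMap.add_apply, Module.End.mul_apply, Q1 j g hj hj']
    by_cases h : j = r
    · rw [if_pos h, add_sub_cancel_right]
    · rw [if_neg h, h2 j g (by omega) hj', map_zero, zero_add, sub_zero]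

theorem IF_one (hv : ∀ j, v j ≠ 0) (N : ℕ) : (1 : Module.End k _) ∈ IF v q N := by
  induction N with
  | zero =>
    obtain ⟨φ, h1, h2⟩ := IF_pow v q hv 0 m 0 (by omega)
    have e : φ = 1 := by
      ext x
      have hx := DD_top v q 0 x
      induction hx using Submodule.span_induction with
      | mem x hx =>
        rcases hx with ⟨s, g, hs, rfl⟩ | ⟨hN, _⟩
        · exact h2 s g (by omega) hs
        · omega
      | zero => simp
      | add x y _ _ hx hy => rw [map_add, map_add, hx, hy]
      | smul c x _ hx => rw [map_smul, map_smul, hx]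
    rwa [e] at h1
  | succ N ih =>
    obtain ⟨Q, Q1, Q2, Q3⟩ := IF_lift v q ih
    obtain ⟨φ, h1, h2⟩ := IF_pow v q hv (N + 1) m 0 (by omega)
    have e : Q + φ - φ * Q = 1 := by
      ext x
      have hx := DD_top v q (N + 1) x
      induction hx using Submodule.span_induction with
      | mem x hx =>
        rcases hx with ⟨s, g, hs, rfl⟩ | ⟨hN, g, g', rfl⟩
        · rw [LinearMap.sub_apply, LinearMap.add_apply, Module.End.mul_apply, Q3 s g hs,
            h2 s g (by omega) hs]
          simp
        · have := Q2 g g'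
          rw [Module.End.one_apply, TT] at this
          rw [LinearMap.sub_apply, LinearMap.add_apply, Module.End.mul_apply, this]
          simp
      | zero => simp
      | add x y _ _ hx hy => rw [map_add, map_add, hx, hy]
      | smul c x _ hx => rw [map_smul, map_smul, hx]
    rw [← e]
    exact sub_mem (add_mem Q1 h1) (IF_mul v q h1 Q1)

theorem tau_nondeg (hv : ∀ j, v j ≠ 0) (N : ℕ) :
    ∀ x, (∀ y, tau v q N (x * y) = 0) → x = 0 := by
  induction N with
  | zero =>
    intro x hx
    obtain ⟨c, rfl⟩ := CH_zero v q x
    have h := hx 1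
    rw [mul_one] at h
    have h' : liftH (sat_zero v q) (algebraMap k _ c) = 0 := h
    rw [AlgHom.commutes] at h'
    have h2 : c = 0 := h'
    rw [h2, map_zero]
  | succ N ih =>
    intro x hx
    refine IF_zero v q (IF_one v q hv N) x fun a => ih _ fun b => ?_
    rw [← EE_mul_io, ← tau_succ, mul_assoc]
    exact hx _

end Final

/-- **Malle–Mathas.**  If the parameters `v_1,…,v_m` are all invertible,
then the cyclotomic Hecke algebra `H_n(v_1,…,v_m;q)` is a symmetric algebra:  there is a
`k`-linear trace map `tr : H_n → k` with `tr (x y) = tr (y x)` for which the bilinear form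
`(x, y) ↦ tr (x y)` is nondegenerate. -/
theorem symmetric_algebra [NeZero m] [NeZero n] (hq : q ≠ 0) (hv : ∀ j, v j ≠ 0) :
    ∃ tr : CH k m n v q →ₗ[k] k,
      (∀ x y : CH k m n v q, tr (x * y) = tr (y * x)) ∧
      (∀ x : CH k m n v q, (∀ y : CH k m n v q, tr (x * y) = 0) → x = 0) ∧
      (∀ y : CH k m n v q, (∀ x : CH k m n v q, tr (x * y) = 0) → y = 0) := by
  haveI : Fact (q ≠ 0) := ⟨hq⟩
  refine ⟨tau v q n, tau_symm v q n, tau_nondeg v q hv n, fun y hy => ?_⟩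
  refine tau_nondeg v q hv n y fun x => ?_
  rw [tau_symm]
  exact hy x

end Cyclo
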